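/- arXiv:math/0505186 — 3 statements merged into one kernel-verified Lean document; each statement's English description precedes it below -/
import Mathlib

section
/- Let ε > 0 and let d, n ≥ 2 be integers. Then for every non-singular hypersurface X ⊂ P^n of degree d defined over ℚ one has N_X(B) = O_{d,ε,n}(B^{n−1+ε}), the implied constant depending at most on d, ε and n. -/
noncomputable section

abbrev KK : Type := AlgebraicClosure ℚ

/-- A primitive integer vector: the gcd of its coordinates is 1. -/
def IsPrimitiveVec {n : ℕ} (x : Fin n → ℤ) : Prop := Finset.univ.gcd x = 1

/-- Height of an integer vector: the maximum modulus of its coordinates. -/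
def heightVec {n : ℕ} (x : Fin n → ℤ) : ℝ :=
  ((Finset.univ.sup fun i => (x i).natAbs : ℕ) : ℝ)

/-- An integer form is non-singular if its partial derivatives have no common
non-trivial zero over the algebraic closure of ℚ, so that the hypersurface it
defines is non-singular. -/
def NonsingularZ {n : ℕ} (F : MvPolynomial (Fin (n + 1)) ℤ) : Prop :=
  ∀ z : Fin (n + 1) → KK,
    (∀ i, MvPolynomial.aeval z (MvPolynomial.pderiv i F) = 0) → z = 0

section
open Classical in
/-- integer points of a lattice in a box -/
noncomputable def bxF {m : ℕ} (L : AddSubgroup (Fin m → ℤ)) (R : ℕ) : Finset (Fin m → ℤ) :=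
  (Fintype.piFinset (fun _ : Fin m => Finset.Icc (-(R : ℤ)) R)).filter (· ∈ L)

lemma mem_bxF {m : ℕ} {L : AddSubgroup (Fin m → ℤ)} {R : ℕ} {y : Fin m → ℤ} :
    y ∈ bxF L R ↔ (∀ i, |y i| ≤ R) ∧ y ∈ L := by
  simp [bxF, Fintype.mem_piFinset, abs_le]

lemma card_bxF_le {m : ℕ} (L : AddSubgroup (Fin m → ℤ)) (R : ℕ) :
    (bxF L R).card ≤ (2 * R + 1) ^ m := by
  classical
  refine (Finset.card_filter_le _ _).trans ?_
  rw [Fintype.card_piFinset]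
  simp only [Int.card_Icc, Finset.prod_const, Finset.card_univ, Fintype.card_fin]
  apply le_of_eq; congr 1; omega

/-- reduction modulo `p` -/
def red {m : ℕ} (p : ℕ) (y : Fin m → ℤ) : Fin m → ZMod p := fun i => (y i : ZMod p)

lemma span_case {m : ℕ} (p : ℕ) [Fact p.Prime] (L : AddSubgroup (Fin m → ℤ)) (R : ℕ)
    (hs : Submodule.span (ZMod p) (Set.image (red p) (bxF L R : Set (Fin m → ℤ))) = ⊤) :
    (bxF L R).card * L.index ≤ (2 * ((m + 1) * R) + 1) ^ m := by
  classical
  -- choose independent vectors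
  obtain ⟨v, hv, hdet⟩ : ∃ v : Fin m → (Fin m → ℤ), (∀ i, v i ∈ bxF L R) ∧
      (Matrix.of v).det ≠ 0 := by
    let b := Module.Basis.ofSpan hs.ge
    have hfin : Module.finrank (ZMod p) (Fin m → ZMod p) = m := by simp
    haveI : Fintype _ := FiniteDimensional.fintypeBasisIndex b
    have hc := Module.finrank_eq_card_basis b
    rw [hfin] at hc
    let e := (Fintype.equivFinOfCardEq hc.symm)
    let b' := b.reindex e
    have hmem : ∀ i, b' i ∈ Set.image (red p) (bxF L R : Set (Fin m → ℤ)) := by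
      intro i
      have : b' i ∈ Set.range b := ⟨e.symm i, by simp [b']⟩
      exact Module.Basis.ofSpan_subset hs.ge this
    choose v hv hvr using hmem
    refine ⟨v, hv, ?_⟩
    intro h0
    have hli := b'.linearIndependent
    have : IsUnit (Matrix.of (fun i => b' i)) := by
      rw [← Matrix.linearIndependent_rows_iff_isUnit]
      exact hli
    rw [Matrix.isUnit_iff_isUnit_det] at this
    have h2 : (Matrix.of (fun i => b' i)) = (Int.castRingHom (ZMod p)).mapMatrix (Matrix.of v) := by
      ext i j
      simp only [Matrix.of_apply, RingHom.mapMatrix_apply, Matrix.map_apply]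
      rw [← hvr i]; rfl
    rw [h2, ← RingHom.map_det, h0] at this
    simp at this
  -- reduce
  have hrep : ∀ z : Fin m → ℤ, ∃ z' : Fin m → ℤ, (∀ i, |z' i| ≤ ((m * R : ℕ) : ℤ)) ∧ z - z' ∈ L := by
    intro z
    let V : Matrix (Fin m) (Fin m) ℚ := (Int.castRingHom ℚ).mapMatrix (Matrix.of v)
    have hV : IsUnit V.det := by
      rw [isUnit_iff_ne_zero]
      simp only [V]
      rw [← RingHom.map_det]
      simpa using hdet
    let t : Fin m → ℚ := Matrix.vecMul (fun i => (z i : ℚ)) V⁻¹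
    have ht : Matrix.vecMul t V = fun i => (z i : ℚ) := by
      simp only [t]
      rw [Matrix.vecMul_vecMul, Matrix.nonsing_inv_mul _ hV, Matrix.vecMul_one]
    refine ⟨z - ∑ i, ⌊t i⌋ • v i, ?_, ?_⟩
    · intro j
      have h1 : ((z j : ℚ)) = ∑ i, t i * (v i j : ℚ) := by
        rw [← congrFun ht j]; simp [Matrix.vecMul, dotProduct, V]
      have h2 : (((z - ∑ i, ⌊t i⌋ • v i) j : ℤ) : ℚ) = ∑ i, (Int.fract (t i)) * (v i j : ℚ) := by
        simp only [Pi.sub_apply, Finset.sum_apply, Pi.smul_apply, smul_eq_mul]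
        push_cast
        rw [h1, ← Finset.sum_sub_distrib]
        refine Finset.sum_congr rfl fun i _ => ?_
        rw [← sub_mul]; rfl
      have h3 : |(((z - ∑ i, ⌊t i⌋ • v i) j : ℤ) : ℚ)| ≤ m * R := by
        rw [h2]
        refine (Finset.abs_sum_le_sum_abs _ _).trans ?_
        have : ∀ i ∈ Finset.univ, |Int.fract (t i) * (v i j : ℚ)| ≤ (R : ℚ) := by
          intro i _
          rw [abs_mul, abs_of_nonneg (Int.fract_nonneg _)]
          have h4 : |(v i j : ℚ)| ≤ R := by
            have := (mem_bxF.1 (hv i)).1 j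
            exact_mod_cast this
          have h5 := (Int.fract_lt_one (t i)).le
          have h6 := Int.fract_nonneg (t i)
          have h7 := abs_nonneg (v i j : ℚ)
          nlinarith
        refine (Finset.sum_le_sum this).trans ?_
        simp
      have h4 : (|((z - ∑ i, ⌊t i⌋ • v i) j : ℤ)| : ℚ) ≤ ((m * R : ℕ) : ℤ) := by
        push_cast; push_cast at h3; exact h3
      exact_mod_cast h4
    · rw [sub_sub_cancel]
      exact AddSubgroup.sum_mem _ fun i _ => AddSubgroup.zsmul_mem _ (mem_bxF.1 (hv i)).2 _
  choose rep hrep1 hrep2 using hrep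
  have hfinle : Nat.card ((bxF L R) × ((Fin m → ℤ) ⧸ L)) ≤
      Nat.card (bxF (⊤ : AddSubgroup (Fin m → ℤ)) ((m + 1) * R)) := by
    refine Nat.card_le_card_of_injective (fun q => ⟨q.1.1 + rep q.2.out, ?_⟩) ?_
    · rw [mem_bxF]
      refine ⟨fun i => ?_, trivial⟩
      have h1 := (mem_bxF.1 q.1.2).1 i
      have h2 := hrep1 q.2.out i
      have h3 := abs_add_le (q.1.1 i) (rep q.2.out i)
      simp only [Pi.add_apply]
      push_cast at *
      nlinarith
    · rintro ⟨⟨y, hy⟩, q⟩ ⟨⟨y', hy'⟩, q'⟩ h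
      simp only [Subtype.mk.injEq] at h
      have hq : ∀ (y : Fin m → ℤ) (q : (Fin m → ℤ) ⧸ L), y ∈ L →
          ((y + rep q.out : Fin m → ℤ) : (Fin m → ℤ) ⧸ L) = q := by
        intro y q hy
        conv_rhs => rw [← QuotientAddGroup.out_eq' q]
        rw [QuotientAddGroup.eq]
        have := L.sub_mem (hrep2 q.out) hy
        convert this using 1
        abel
      have e1 := hq y q (mem_bxF.1 hy).2
      have e2 := hq y' q' (mem_bxF.1 hy').2
      have : q = q' := by rw [← e1, ← e2, h]
      subst this
      have : y = y' := by simpa using h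
      subst this; rfl
  rw [Nat.card_prod] at hfinle
  simp only [Nat.card_eq_fintype_card, Fintype.card_coe] at hfinle
  exact hfinle.trans (card_bxF_le _ _)

lemma nonspan_case {m : ℕ} (p : ℕ) [Fact p.Prime] (L : AddSubgroup (Fin m → ℤ)) (Q : ℕ) (hQ : 0 < Q)
    (hcop : Nat.Coprime p L.index) (Z : Finset (Fin m → ZMod p)) (G : Finset (Fin m → ℤ))
    (hG : G ⊆ bxF L (Q * p)) (hZ : ∀ y ∈ G, red p y ∈ Z) :
    G.card ≤ 3 ^ m * Z.card * (bxF L Q).card := by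
  classical
  have hp : 0 < p := (Fact.out : p.Prime).pos
  let cell : (Fin m → ℤ) → (Fin m → ℤ) := fun y i => y i / ((Q * p : ℕ) : ℤ)
  let key : (Fin m → ℤ) → (Fin m → ZMod p) × (Fin m → ℤ) := fun y => (red p y, cell y)
  have hQp : (0 : ℤ) < ((Q * p : ℕ) : ℤ) := by exact_mod_cast Nat.mul_pos hQ hp
  have himg : G.image key ⊆ Z ×ˢ (Fintype.piFinset (fun _ : Fin m => Finset.Icc (-1 : ℤ) 1)) := by
    intro k hk
    obtain ⟨y, hy, rfl⟩ := Finset.mem_image.1 hk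
    rw [Finset.mem_product]
    refine ⟨hZ y hy, ?_⟩
    rw [Fintype.mem_piFinset]
    intro i
    have h := (mem_bxF.1 (hG hy)).1 i
    rw [abs_le] at h
    rw [Finset.mem_Icc]
    constructor
    · exact (Int.le_ediv_iff_mul_le hQp).2 (by linarith)
    · have := Int.ediv_le_ediv hQp h.2
      rwa [Int.ediv_self hQp.ne'] at this
  have hcard : (G.image key).card ≤ Z.card * 3 ^ m := by
    refine (Finset.card_le_card himg).trans ?_
    rw [Finset.card_product, Fintype.card_piFinset]
    simp
  have hfib : ∀ k ∈ G.image key, (G.filter (fun y => key y = k)).card ≤ (bxF L Q).card := by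
    intro k hk
    obtain ⟨y0, hy0, rfl⟩ := Finset.mem_image.1 hk
    have hdvd : ∀ y ∈ G.filter (fun y => key y = key y0), ∀ i, (p : ℤ) ∣ y i - y0 i := by
      intro y hy i
      have h := (Finset.mem_filter.1 hy).2
      have h1 : red p y = red p y0 := congrArg Prod.fst h
      have h2 := congrFun h1 i
      simp only [red] at h2
      rw [← ZMod.intCast_zmod_eq_zero_iff_dvd]
      push_cast
      rw [h2, sub_self]
    refine Finset.card_le_card_of_injOn (fun y i => (y i - y0 i) / p) ?_ ?_
    · intro y hy
      have hd := hdvd y hy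
      have hyG := (Finset.mem_filter.1 hy).1
      have hpz : (0 : ℤ) < p := by exact_mod_cast hp
      refine mem_bxF.2 ⟨fun i => ?_, ?_⟩
      · have h := (Finset.mem_filter.1 hy).2
        have h1 : cell y = cell y0 := congrArg Prod.snd h
        have h2 := congrFun h1 i
        simp only [cell] at h2
        have e1 := Int.emod_add_mul_ediv (y i) ((Q * p : ℕ) : ℤ)
        have e2 := Int.emod_add_mul_ediv (y0 i) ((Q * p : ℕ) : ℤ)
        have a1 := Int.emod_nonneg (y i) hQp.ne'
        have a2 := Int.emod_lt_of_pos (y i) hQp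
        have a3 := Int.emod_nonneg (y0 i) hQp.ne'
        have a4 := Int.emod_lt_of_pos (y0 i) hQp
        rw [h2] at e1
        have hle : |y i - y0 i| ≤ (Q : ℤ) * p := by
          rw [abs_le]; push_cast at *; constructor <;> linarith
        obtain ⟨c, hc⟩ := hd i
        show |(y i - y0 i) / (p : ℤ)| ≤ (Q : ℤ)
        rw [hc, Int.mul_ediv_cancel_left _ hpz.ne']
        rw [hc, abs_mul, abs_of_pos hpz, mul_comm] at hle
        exact le_of_mul_le_mul_right hle hpz
      · set w : Fin m → ℤ := fun i => (y i - y0 i) / p with hw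
        have hpw : (p : ℤ) • w = y - y0 := by
          ext i
          simp only [hw, Pi.smul_apply, smul_eq_mul, Pi.sub_apply]
          exact Int.mul_ediv_cancel' (hd i)
        have h1 : (p : ℤ) • w ∈ L := by
          rw [hpw]
          exact L.sub_mem (mem_bxF.1 (hG hyG)).2 (mem_bxF.1 (hG hy0)).2
        have h2 : (L.index : ℤ) • w ∈ L := by
          rw [natCast_zsmul]; exact L.nsmul_index_mem w
        have hb := Nat.isCoprime_iff_coprime.2 hcop
        obtain ⟨a, b, hab⟩ := hb
        have : w = a • ((p : ℤ) • w) + b • ((L.index : ℤ) • w) := by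
          rw [smul_smul, smul_smul, ← add_smul, hab, one_smul]
        have hmem := L.add_mem (L.zsmul_mem h1 a) (L.zsmul_mem h2 b)
        rwa [← this] at hmem
    · intro y hy y' hy' h
      ext i
      have := congrFun h i
      simp only at this
      have e1 := Int.mul_ediv_cancel' (hdvd y hy i)
      have e2 := Int.mul_ediv_cancel' (hdvd y' hy' i)
      rw [this] at e1
      linarith
  calc G.card ≤ (bxF L Q).card * (G.image key).card :=
        Finset.card_le_mul_card_image _ _ hfib
    _ ≤ (bxF L Q).card * (Z.card * 3 ^ m) := Nat.mul_le_mul_left _ hcard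
    _ = _ := by ring
end

section
open MvPolynomial
lemma aeval_red {m : ℕ} (p : ℕ) (x : Fin m → ℤ) (F : MvPolynomial (Fin m) ℤ) :
    aeval (fun i => (x i : ZMod p)) F = ((eval x F : ℤ) : ZMod p) := by
  induction F using MvPolynomial.induction_on with
  | C a => simp
  | add f g hf hg => simp [hf, hg]
  | mul_X f j hf => simp [hf]

lemma eval_smul_hom {σ R : Type*} [CommRing R] {d : ℕ} {F : MvPolynomial σ R}
    (hF : F.IsHomogeneous d) (c : R) (x : σ → R) :
    eval (fun i => c * x i) F = c ^ d * eval x F := by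
  rw [eval_eq, eval_eq, Finset.mul_sum]
  refine Finset.sum_congr rfl fun s hs => ?_
  have h := hF (mem_support_iff.1 hs)
  rw [Finsupp.weight_apply, Finsupp.sum] at h
  simp only [Pi.one_apply, smul_eq_mul, mul_one] at h
  simp only [mul_pow]
  rw [Finset.prod_mul_distrib, Finset.prod_pow_eq_pow_sum, h]
  ring

lemma taylor {m : ℕ} (F : MvPolynomial (Fin m) ℤ) (x z : Fin m → ℤ) (q : ℤ) :
    q ^ 2 ∣ eval (fun i => x i + q * z i) F - (eval x F + q * ∑ i, eval x (pderiv i F) * z i) := by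
  induction F using MvPolynomial.induction_on with
  | C a => simp
  | add f g hf hg =>
    obtain ⟨a, ha⟩ := hf
    obtain ⟨b, hb⟩ := hg
    refine ⟨a + b, ?_⟩
    simp only [map_add, add_mul, Finset.sum_add_distrib]
    linear_combination ha + hb
  | mul_X f j hf =>
    obtain ⟨c, hc⟩ := hf
    have e : ∑ i, eval x (pderiv i (f * X j)) * z i =
        (∑ i, eval x (pderiv i f) * z i) * x j + eval x f * z j := by
      simp only [pderiv_mul, map_add, map_mul, eval_X, add_mul, Finset.sum_add_distrib]
      congr 1
      · rw [Finset.sum_mul]; refine Finset.sum_congr rfl fun i _ => by ring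
      · rw [Finset.sum_eq_single j]
        · simp
        · intro b _ hb; simp [pderiv_X_of_ne hb.symm]
        · simp
    rw [e]
    simp only [map_mul, eval_X]
    have : eval (fun i => x i + q * z i) f = eval x f + q * (∑ i, eval x (pderiv i f) * z i) + q ^ 2 * c := by linarith
    rw [this]
    exact ⟨c * (x j + q * z j) + (∑ i, eval x (pderiv i f) * z i) * z j, by ring⟩

/-- The properties of a good prime used in the recursion. -/
structure GoodP {n : ℕ} (F : MvPolynomial (Fin (n + 1)) ℤ) (d p : ℕ) : Prop where
  g1 : ∀ u : Fin (n + 1) → ZMod p, u ≠ 0 → ∃ i, aeval u (pderiv i F) ≠ 0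
  g2 : ∀ a : Fin (n + 1) → ZMod p, a ≠ 0 →
    Nat.card {u : Fin (n + 1) → ZMod p // aeval u F = 0 ∧ ∑ i, a i * u i = 0} ≤ d * p ^ (n - 1)
  g3 : Nat.card {u : Fin (n + 1) → ZMod p // aeval u F = 0} ≤ d * p ^ n

/-- reduction as hom -/
def redHom (m p : ℕ) : (Fin m → ℤ) →+ (Fin m → ZMod p) where
  toFun := red p
  map_zero' := by ext; simp [red]
  map_add' := by intros; ext; simp [red]

/-- the gradient functional modulo `p ^ 2` -/
noncomputable def gradHom {m : ℕ} (F : MvPolynomial (Fin m) ℤ) (p : ℕ) (x : Fin m → ℤ) :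
    (Fin m → ℤ) →+ ZMod (p ^ 2) where
  toFun y := ((∑ i, eval x (pderiv i F) * y i : ℤ) : ZMod (p ^ 2))
  map_zero' := by simp
  map_add' := by intros; simp [mul_add, Finset.sum_add_distrib]

/-- first lattice -/
noncomputable def K1 {m : ℕ} (p : ℕ) (x : Fin m → ℤ) : AddSubgroup (Fin m → ℤ) :=
  (Submodule.span (ZMod p) {red p x}).toAddSubgroup.comap (redHom m p)

/-- child lattice -/
noncomputable def K2 {m : ℕ} (F : MvPolynomial (Fin m) ℤ) (p : ℕ) (x : Fin m → ℤ) : AddSubgroup (Fin m → ℤ) :=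
  (gradHom F p x).ker ⊓ K1 p x

lemma mem_K1 {m : ℕ} {p : ℕ} {x y : Fin m → ℤ} :
    y ∈ K1 p x ↔ ∃ c : ℤ, red p y = fun i => (c : ZMod p) * (x i : ZMod p) := by
  rw [K1, AddSubgroup.mem_comap, Submodule.mem_toAddSubgroup, Submodule.mem_span_singleton]
  constructor
  · rintro ⟨c, hc⟩
    obtain ⟨c, rfl⟩ := ZMod.intCast_surjective c
    exact ⟨c, hc.symm⟩
  · rintro ⟨c, hc⟩
    exact ⟨c, hc.symm⟩

lemma euler_eval {m d : ℕ} {F : MvPolynomial (Fin m) ℤ} (hF : F.IsHomogeneous d) (x : Fin m → ℤ) :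
    ∑ i, eval x (pderiv i F) * x i = d * eval x F := by
  have := congrArg (eval x) hF.sum_X_mul_pderiv
  simp only [map_sum, map_mul, eval_X, nsmul_eq_mul, map_natCast] at this
  rw [← this]
  exact Finset.sum_congr rfl fun i _ => mul_comm _ _

lemma exists_lift {m : ℕ} {p : ℕ} {x y : Fin m → ℤ} (h : y ∈ K1 p x) :
    ∃ (c : ℤ) (z : Fin m → ℤ), ∀ i, y i = c * x i + p * z i := by
  obtain ⟨c, hc⟩ := mem_K1.1 h
  have : ∀ i, (p : ℤ) ∣ y i - c * x i := by
    intro i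
    rw [← ZMod.intCast_zmod_eq_zero_iff_dvd]
    have := congrFun hc i
    simp only [red] at this
    push_cast
    rw [this, sub_self]
  choose z hz using this
  exact ⟨c, z, fun i => by linarith [hz i]⟩

lemma grad_dvd {m d : ℕ} {F : MvPolynomial (Fin m) ℤ} (hF : F.IsHomogeneous d) {p : ℕ}
    {x y : Fin m → ℤ} (hx : eval x F = 0) (h : y ∈ K1 p x) :
    (p : ℤ) ∣ ∑ i, eval x (pderiv i F) * y i := by
  obtain ⟨c, z, hz⟩ := exists_lift h
  have : ∑ i, eval x (pderiv i F) * y i = c * (∑ i, eval x (pderiv i F) * x i) +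
      p * ∑ i, eval x (pderiv i F) * z i := by
    rw [Finset.mul_sum, Finset.mul_sum, ← Finset.sum_add_distrib]
    refine Finset.sum_congr rfl fun i _ => by rw [hz i]; ring
  rw [this, euler_eval hF, hx]
  exact ⟨∑ i, eval x (pderiv i F) * z i, by ring⟩

lemma mem_K2_of {m d : ℕ} {F : MvPolynomial (Fin m) ℤ} (hF : F.IsHomogeneous d) {p : ℕ}
    [Fact p.Prime] {x y : Fin m → ℤ} (hx : eval x F = 0) (hy : eval y F = 0)
    (hy0 : red p y ≠ 0) (h : y ∈ K1 p x) : y ∈ K2 F p x := by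
  refine ⟨?_, h⟩
  have hp : p.Prime := Fact.out
  have hpz : (p : ℤ) ≠ 0 := by exact_mod_cast hp.ne_zero
  have hpp : Prime (p : ℤ) := Nat.prime_iff_prime_int.1 hp
  obtain ⟨c, z, hz⟩ := exists_lift h
  have hc : ¬ (p : ℤ) ∣ c := by
    rintro ⟨e, rfl⟩
    apply hy0
    ext i
    simp [red, hz i]
  have hyz : y = fun i => (fun i => c * x i) i + p * z i := funext hz
  have ht := taylor F (fun i => c * x i) z p
  rw [← hyz, hy, eval_smul_hom hF, hx] at ht
  have e : ∑ i, eval (fun i => c * x i) (pderiv i F) * z i =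
      c ^ (d - 1) * ∑ i, eval x (pderiv i F) * z i := by
    rw [Finset.mul_sum]
    refine Finset.sum_congr rfl fun i _ => ?_
    rw [eval_smul_hom hF.pderiv]; ring
  rw [e] at ht
  have ht2 : (p : ℤ) * p ∣ p * (c ^ (d - 1) * ∑ i, eval x (pderiv i F) * z i) := by
    obtain ⟨k, hk⟩ := ht
    exact ⟨-k, by linear_combination -hk⟩
  have ht3 := (mul_dvd_mul_iff_left hpz).1 ht2
  have ht4 : (p : ℤ) ∣ ∑ i, eval x (pderiv i F) * z i := by
    rcases hpp.dvd_or_dvd ht3 with h | h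
    · exact absurd (hpp.dvd_of_dvd_pow h) hc
    · exact h
  show ((∑ i, eval x (pderiv i F) * y i : ℤ) : ZMod (p ^ 2)) = 0
  rw [ZMod.intCast_zmod_eq_zero_iff_dvd]
  have : ∑ i, eval x (pderiv i F) * y i = c * (∑ i, eval x (pderiv i F) * x i) +
      p * ∑ i, eval x (pderiv i F) * z i := by
    rw [Finset.mul_sum, Finset.mul_sum, ← Finset.sum_add_distrib]
    refine Finset.sum_congr rfl fun i _ => by rw [hz i]; ring
  rw [this, euler_eval hF, hx]
  simp only [mul_zero, zero_add, pow_two]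
  exact mul_dvd_mul_left _ ht4

lemma index_K2 {n d : ℕ} {F : MvPolynomial (Fin (n + 1)) ℤ} (hF : F.IsHomogeneous d) {p : ℕ}
    [Fact p.Prime] (hg : GoodP F d p) {x : Fin (n + 1) → ℤ} (hx : eval x F = 0)
    (hx0 : red p x ≠ 0) : (K2 F p x).index = p ^ (n + 1) := by
  have hp : p.Prime := Fact.out
  have h1 : (K1 p x).index = p ^ n := by
    have hsurj : Function.Surjective (redHom (n + 1) p) := by
      intro u
      choose v hv using fun i => ZMod.intCast_surjective (u i)
      exact ⟨v, funext hv⟩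
    rw [K1, AddSubgroup.index_comap_of_surjective _ hsurj]
    have hc := AddSubgroup.card_mul_index (Submodule.span (ZMod p) {red p x}).toAddSubgroup
    have hcs : Nat.card (Submodule.span (ZMod p) {red p x}).toAddSubgroup = p := by
      have := Module.natCard_eq_pow_finrank (K := ZMod p) (V := Submodule.span (ZMod p) {red p x})
      rw [finrank_span_singleton hx0, pow_one, Nat.card_zmod] at this
      exact this
    rw [hcs] at hc
    have hcg : Nat.card (Fin (n + 1) → ZMod p) = p ^ n * p := by
      rw [Nat.card_fun]; simp [pow_succ]
    rw [hcg, mul_comm] at hc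
    exact Nat.eq_of_mul_eq_mul_right hp.pos hc
  have h2 : (K2 F p x).relIndex (K1 p x) = p := by
    rw [K2, AddSubgroup.inf_relIndex_right, AddSubgroup.relIndex_ker]
    have : (K1 p x).map (gradHom F p x) = AddSubgroup.zmultiples ((p : ℕ) : ZMod (p ^ 2)) := by
      apply le_antisymm
      · rintro _ ⟨y, hy, rfl⟩
        obtain ⟨c, hc⟩ := grad_dvd hF hx hy
        rw [AddSubgroup.mem_zmultiples_iff]
        refine ⟨c, ?_⟩
        show _ = ((∑ i, eval x (pderiv i F) * y i : ℤ) : ZMod (p ^ 2))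
        rw [hc]; push_cast; rw [zsmul_eq_mul, mul_comm]
      · rw [AddSubgroup.zmultiples_le]
        obtain ⟨i, hi⟩ := hg.g1 _ hx0
        have hi' : aeval (fun i => (x i : ZMod p)) (pderiv i F) ≠ 0 := hi
        rw [aeval_red] at hi'
        obtain ⟨c, hc⟩ := ZMod.intCast_surjective (((eval x (pderiv i F) : ℤ) : ZMod p)⁻¹)
        have hc1 : (p : ℤ) ∣ eval x (pderiv i F) * c - 1 := by
          rw [← ZMod.intCast_zmod_eq_zero_iff_dvd]
          push_cast
          rw [hc, mul_inv_cancel₀ hi', sub_self]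
        obtain ⟨e, he⟩ := hc1
        refine ⟨fun j => p * (if j = i then c else 0), ?_, ?_⟩
        · refine mem_K1.2 ⟨0, ?_⟩
          ext j; simp [red]
        · show ((∑ j, eval x (pderiv j F) * (p * (if j = i then c else 0)) : ℤ) : ZMod (p ^ 2)) = _
          have : ∑ j, eval x (pderiv j F) * (p * (if j = i then c else 0)) = p + p ^ 2 * e := by
            rw [Finset.sum_eq_single i]
            · simp only [if_true]; linear_combination (p : ℤ) * he
            · intro b _ hb; simp [hb]
            · simp
          rw [this]
          have h0 := ZMod.natCast_self (p ^ 2)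
          push_cast at h0 ⊢
          rw [h0]; ring
    rw [this, Nat.card_zmultiples, ZMod.addOrderOf_coe _ (pow_ne_zero 2 hp.ne_zero)]
    rw [pow_two, Nat.gcd_mul_right_left, Nat.mul_div_cancel _ hp.pos]
  have := AddSubgroup.relIndex_mul_index (H := K2 F p x) (K := K1 p x) inf_le_right
  rw [← this, h1, h2, pow_succ, mul_comm]
end

section
open MvPolynomial

lemma step_bound {n d : ℕ} (hn : 1 ≤ n) {F : MvPolynomial (Fin (n + 1)) ℤ} (hF : F.IsHomogeneous d)
    {p : ℕ} [Fact p.Prime] (hg : GoodP F d p) (L : AddSubgroup (Fin (n + 1) → ℤ)) (Q : ℕ)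
    (hQ : 0 < Q) (hL0 : L.index ≠ 0) (hQL : Q ^ (n + 1) ∣ L.index) (hcop : Nat.Coprime p L.index)
    (G : Finset (Fin (n + 1) → ℤ)) (hG : G ⊆ bxF L (Q * p))
    (hGF : ∀ y ∈ G, aeval (red p y) F = 0) :
    G.card ≤ p ^ (n - 1) * ((2 * n + 5) ^ (n + 1) * p ^ 2 + 3 ^ (n + 1) * d * (bxF L Q).card) := by
  classical
  have hp : p.Prime := Fact.out
  by_cases hs : Submodule.span (ZMod p) (Set.image (red p) (bxF L (Q * p) : Set (Fin (n + 1) → ℤ))) = ⊤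
  · have h1 := span_case p L (Q * p) hs
    have h2 : Q ^ (n + 1) ≤ L.index := Nat.le_of_dvd (Nat.pos_of_ne_zero hL0) hQL
    have h3 : (bxF L (Q * p)).card * Q ^ (n + 1) ≤ ((2 * n + 5) * p) ^ (n + 1) * Q ^ (n + 1) := by
      refine (Nat.mul_le_mul_left _ h2).trans (h1.trans ?_)
      rw [← mul_pow]
      apply Nat.pow_le_pow_left
      have : 1 ≤ Q * p := Nat.mul_pos hQ hp.pos
      nlinarith
    have h4 := Nat.le_of_mul_le_mul_right h3 (pow_pos hQ _)
    have h5 : p ^ (n + 1) = p ^ (n - 1) * p ^ 2 := by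
      rw [← pow_add]; congr 1; omega
    calc G.card ≤ (bxF L (Q * p)).card := Finset.card_le_card hG
      _ ≤ ((2 * n + 5) * p) ^ (n + 1) := h4
      _ = p ^ (n - 1) * ((2 * n + 5) ^ (n + 1) * p ^ 2) := by rw [mul_pow, h5]; ring
      _ ≤ _ := Nat.mul_le_mul_left _ (Nat.le_add_right _ _)
  · obtain ⟨f, hf0, hf⟩ := Submodule.exists_le_ker_of_lt_top _ (lt_top_iff_ne_top.2 hs)
    let a : Fin (n + 1) → ZMod p := fun i => f (fun j => if i = j then 1 else 0)
    have hfa : ∀ u, f u = ∑ i, a i * u i := by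
      intro u
      rw [LinearMap.pi_apply_eq_sum_univ f u]
      exact Finset.sum_congr rfl fun i _ => by simp [a, mul_comm]
    have ha : a ≠ 0 := by
      intro h
      apply hf0
      refine LinearMap.ext fun u => ?_
      rw [hfa, h]; simp
    let Z : Finset (Fin (n + 1) → ZMod p) :=
      Finset.univ.filter (fun u => aeval u F = 0 ∧ ∑ i, a i * u i = 0)
    have hZ : Z.card ≤ d * p ^ (n - 1) := by
      have := hg.g2 a ha
      rwa [Nat.card_eq_fintype_card, Fintype.card_subtype] at this
    have := nonspan_case p L Q hQ hcop Z G hG (by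
      intro y hy
      refine Finset.mem_filter.2 ⟨Finset.mem_univ _, hGF y hy, ?_⟩
      rw [← hfa]
      exact hf (Submodule.subset_span ⟨y, hG hy, rfl⟩))
    calc G.card ≤ _ := this
      _ ≤ 3 ^ (n + 1) * (d * p ^ (n - 1)) * (bxF L Q).card := by gcongr
      _ = p ^ (n - 1) * (3 ^ (n + 1) * d * (bxF L Q).card) := by ring
      _ ≤ _ := Nat.mul_le_mul_left _ (Nat.le_add_left _ _)

lemma step {n d : ℕ} (hn : 1 ≤ n) {F : MvPolynomial (Fin (n + 1)) ℤ} (hF : F.IsHomogeneous d)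
    {p : ℕ} [Fact p.Prime] (hg : GoodP F d p) (L : AddSubgroup (Fin (n + 1) → ℤ)) (Q : ℕ)
    (hQ : 0 < Q) (hL0 : L.index ≠ 0) (hQL : Q ^ (n + 1) ∣ L.index) (hcop : Nat.Coprime p L.index)
    (S : Finset (Fin (n + 1) → ℤ)) (hS : ∀ x ∈ S, eval x F = 0 ∧ red p x ≠ 0) :
    ∃ T : Finset (Fin (n + 1) → ℤ), T ⊆ S ∧ T.card ≤ 2 * d * p ^ (n - 1) ∧
      (∀ x ∈ S, ∃ t ∈ T, x ∈ K2 F p t) ∧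
      ∑ t ∈ T, (bxF (L ⊓ K2 F p t) (Q * p)).card ≤
        T.card * (3 ^ (n + 1) * (bxF L Q).card) +
        p ^ (n - 1) * ((2 * n + 5) ^ (n + 1) * p ^ 2 + 3 ^ (n + 1) * d * (bxF L Q).card) := by
  classical
  have hp : p.Prime := Fact.out
  let cls : (Fin (n + 1) → ℤ) → Submodule (ZMod p) (Fin (n + 1) → ZMod p) :=
    fun x => Submodule.span (ZMod p) {red p x}
  obtain ⟨T', hT'S, hbij⟩ := Set.exists_subset_bijOn (S : Set (Fin (n + 1) → ℤ)) cls
  have hfinT : T'.Finite := S.finite_toSet.subset hT'S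
  obtain ⟨T, rfl⟩ := hfinT.exists_finset_coe
  have hTS : T ⊆ S := by exact_mod_cast hT'S
  refine ⟨T, hTS, ?_, ?_, ?_⟩
  · have hle : Nat.card (T × (ZMod p)ˣ) ≤ Nat.card {u : Fin (n + 1) → ZMod p // aeval u F = 0} := by
      refine Nat.card_le_card_of_injective
        (fun q => ⟨fun i => (q.2 : ZMod p) * red p q.1.1 i, ?_⟩) ?_
      · obtain ⟨⟨x, hx⟩, c⟩ := q
        obtain ⟨e, he⟩ := ZMod.intCast_surjective (c : ZMod p)
        have h1 := aeval_red p (fun i => e * x i) F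
        rw [eval_smul_hom hF, (hS x (hTS hx)).1] at h1
        simp only [red]
        rw [← he]
        push_cast at h1
        rw [h1]; simp
      · rintro ⟨⟨x, hx⟩, c⟩ ⟨⟨x', hx'⟩, c'⟩ h
        simp only [Subtype.mk.injEq] at h
        have h' : c • red p x = c' • red p x' := h
        have hc : cls x = cls x' := by
          simp only [cls]
          rw [← Submodule.span_singleton_group_smul_eq (ZMod p) c (red p x), h',
            Submodule.span_singleton_group_smul_eq]
        have hxx := hbij.injOn hx hx' hc
        subst hxx
        obtain ⟨i, hi⟩ := Function.ne_iff.1 (hS x (hTS hx)).2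
        have h2 := congrFun h i
        have h3 : (c : ZMod p) = c' := mul_right_cancel₀ hi h2
        have := Units.ext h3
        subst this; rfl
    have h1 := hle.trans hg.g3
    rw [Nat.card_prod, Nat.card_eq_fintype_card, Nat.card_eq_fintype_card, ZMod.card_units] at h1
    rw [Fintype.card_coe] at h1
    have h2 : p ≤ 2 * (p - 1) := by have := hp.two_le; omega
    have h3 : T.card * p ≤ (2 * d * p ^ (n - 1)) * p := by
      have h5 : p ^ n = p ^ (n - 1) * p := by
        rw [← pow_succ]; congr 1; omega
      rw [h5] at h1
      calc T.card * p ≤ T.card * (2 * (p - 1)) := Nat.mul_le_mul_left _ h2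
        _ = 2 * (T.card * (p - 1)) := by ring
        _ ≤ 2 * (d * (p ^ (n - 1) * p)) := Nat.mul_le_mul_left _ h1
        _ = _ := by ring
    exact Nat.le_of_mul_le_mul_right h3 hp.pos
  · intro x hx
    obtain ⟨t, ht, htx⟩ := hbij.surjOn ⟨x, hx, rfl⟩
    refine ⟨t, ht, ?_⟩
    refine mem_K2_of hF (hS t (hTS ht)).1 (hS x hx).1 (hS x hx).2 ?_
    have : red p x ∈ cls t := by
      rw [htx]; exact Submodule.mem_span_singleton_self _
    exact this
  · let A : (Fin (n + 1) → ℤ) → Finset (Fin (n + 1) → ℤ) := fun t =>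
      (bxF (L ⊓ K2 F p t) (Q * p)).filter (fun y => red p y = 0)
    let A' : (Fin (n + 1) → ℤ) → Finset (Fin (n + 1) → ℤ) := fun t =>
      (bxF (L ⊓ K2 F p t) (Q * p)).filter (fun y => ¬ red p y = 0)
    have hsplit : ∀ t, (bxF (L ⊓ K2 F p t) (Q * p)).card = (A t).card + (A' t).card := fun t =>
      (Finset.card_filter_add_card_filter_not _).symm
    have hsub : ∀ t, bxF (L ⊓ K2 F p t) (Q * p) ⊆ bxF L (Q * p) := by
      intro t y hy
      have := mem_bxF.1 hy
      exact mem_bxF.2 ⟨this.1, this.2.1⟩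
    rw [Finset.sum_congr rfl (fun t _ => hsplit t), Finset.sum_add_distrib]
    apply Nat.add_le_add
    · rw [← smul_eq_mul]
      apply Finset.sum_le_card_nsmul
      intro t _
      have := nonspan_case p L Q hQ hcop {0} (A t) ((Finset.filter_subset _ _).trans (hsub t))
        (fun y hy => by simpa using (Finset.mem_filter.1 hy).2)
      simpa using this
    · rw [← Finset.card_biUnion]
      · apply step_bound hn hF hg L Q hQ hL0 hQL hcop
        · intro y hy
          obtain ⟨t, _, h⟩ := Finset.mem_biUnion.1 hy
          exact hsub t (Finset.mem_filter.1 h).1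
        · intro y hy
          obtain ⟨t, ht, h⟩ := Finset.mem_biUnion.1 hy
          have h1 := (mem_bxF.1 (Finset.mem_filter.1 h).1).2.2.2
          obtain ⟨c, hc⟩ := mem_K1.1 h1
          rw [hc]
          have h1 := aeval_red p (fun i => c * t i) F
          rw [eval_smul_hom hF, (hS t (hTS ht)).1] at h1
          push_cast at h1
          rw [h1]; simp
      · intro t ht t' ht' hne
        show Disjoint (A' t) (A' t')
        rw [Finset.disjoint_left]
        intro y hy hy'
        apply hne
        apply hbij.injOn ht ht'
        have key : ∀ t, y ∈ A' t → cls t = cls y := by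
          intro t hy
          have h0 := (Finset.mem_filter.1 hy).2
          have h1 := (mem_bxF.1 (Finset.mem_filter.1 hy).1).2.2.2
          obtain ⟨c, hc⟩ := mem_K1.1 h1
          have hc' : red p y = (c : ZMod p) • red p t := hc
          have hc0 : (c : ZMod p) ≠ 0 := by
            intro h; apply h0; rw [hc', h, zero_smul]
          simp only [cls]
          rw [hc']
          exact (Submodule.span_singleton_smul_eq (isUnit_iff_ne_zero.2 hc0) _).symm
        rw [key t hy, key t' hy']

/-- the constant of the recursion -/
def c0 (d n : ℕ) : ℕ := (2 * n + 5) ^ (n + 1) + 3 ^ (n + 1) * (3 * d) + 2 * d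

theorem recur {n d : ℕ} (hn : 1 ≤ n) {F : MvPolynomial (Fin (n + 1)) ℤ} (hF : F.IsHomogeneous d)
    (P : ℕ) : ∀ ps : List ℕ, (∀ p ∈ ps, p.Prime ∧ GoodP F d p ∧ p ≤ P) → ps.Nodup →
    ∀ (L : AddSubgroup (Fin (n + 1) → ℤ)) (Q : ℕ), 0 < Q → L.index ≠ 0 → Q ^ (n + 1) ∣ L.index →
    (∀ p ∈ ps, Nat.Coprime p L.index) →
    ∀ S : Finset (Fin (n + 1) → ℤ), (∀ x ∈ S, x ∈ L ∧ eval x F = 0 ∧ (∀ p ∈ ps, red p x ≠ 0) ∧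
      ∀ i, |x i| ≤ ((Q * ps.prod : ℕ) : ℤ)) →
    S.card ≤ c0 d n ^ ps.length * ps.prod ^ (n - 1) * ((bxF L Q).card + ps.length * P ^ 2) := by
  intro ps
  induction ps with
  | nil =>
    intro _ _ L Q _ _ _ _ S hS
    simp only [List.length_nil, pow_zero, List.prod_nil, one_pow, one_mul, zero_mul, add_zero]
    apply Finset.card_le_card
    intro x hx
    obtain ⟨h1, _, _, h4⟩ := hS x hx
    exact mem_bxF.2 ⟨fun i => by simpa using h4 i, h1⟩
  | cons p ps ih =>
    intro hps hnd L Q hQ hL0 hQL hcop S hS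
    classical
    obtain ⟨hp, hg, hpP⟩ := hps p List.mem_cons_self
    haveI : Fact p.Prime := ⟨hp⟩
    have hcp := hcop p List.mem_cons_self
    rw [List.nodup_cons] at hnd
    obtain ⟨T, hTS, hTc, hcov, hsum⟩ := step hn hF hg L Q hQ hL0 hQL hcp S
      (fun x hx => ⟨(hS x hx).2.1, (hS x hx).2.2.1 p List.mem_cons_self⟩)
    have hcQ : Nat.Coprime (Q ^ (n + 1)) (p ^ (n + 1)) := by
      have h1 : Nat.Coprime (Q ^ (n + 1)) p := (Nat.Coprime.coprime_dvd_right hQL hcp).symm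
      exact h1.pow_right _
    have hchild : ∀ t ∈ T, (S.filter (· ∈ K2 F p t)).card ≤
        c0 d n ^ ps.length * ps.prod ^ (n - 1) *
          ((bxF (L ⊓ K2 F p t) (Q * p)).card + ps.length * P ^ 2) := by
      intro t ht
      have hK := index_K2 hF hg (hS t (hTS ht)).2.1 ((hS t (hTS ht)).2.2.1 p List.mem_cons_self)
      have hK0 : (K2 F p t).index ≠ 0 := by rw [hK]; exact pow_ne_zero _ hp.ne_zero
      have hdiv : (L ⊓ K2 F p t).index ∣ L.index * p ^ (n + 1) := by
        rw [← AddSubgroup.relIndex_mul_index (H := L ⊓ K2 F p t) (K := L) inf_le_left, mul_comm]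
        apply mul_dvd_mul_left
        rw [inf_comm, AddSubgroup.inf_relIndex_right, ← hK]
        exact AddSubgroup.relIndex_dvd_index_of_normal _ _
      refine ih (fun q hq => hps q (List.mem_cons_of_mem _ hq)) hnd.2 _ _ (Nat.mul_pos hQ hp.pos)
        ?_ ?_ ?_ _ ?_
      · exact ne_zero_of_dvd_ne_zero (mul_ne_zero hL0 (pow_ne_zero _ hp.ne_zero)) hdiv
      · rw [mul_pow]
        refine hcQ.mul_dvd_of_dvd_of_dvd ?_ ?_
        · exact hQL.trans (AddSubgroup.index_dvd_of_le inf_le_left)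
        · rw [← hK]; exact AddSubgroup.index_dvd_of_le inf_le_right
      · intro q hq
        refine Nat.Coprime.coprime_dvd_right hdiv ?_
        refine Nat.Coprime.mul_right (hcop q (List.mem_cons_of_mem _ hq)) (Nat.Coprime.pow_right _ ?_)
        refine (Nat.coprime_primes (hps q (List.mem_cons_of_mem _ hq)).1 hp).2 ?_
        rintro rfl; exact hnd.1 hq
      · intro x hx
        obtain ⟨hxS, hxK⟩ := Finset.mem_filter.1 hx
        obtain ⟨h1, h2, h3, h4⟩ := hS x hxS
        refine ⟨⟨h1, hxK⟩, h2, fun q hq => h3 q (List.mem_cons_of_mem _ hq), fun i => ?_⟩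
        have := h4 i
        rwa [List.prod_cons, ← mul_assoc] at this
    have hSle : S.card ≤ ∑ t ∈ T, (S.filter (· ∈ K2 F p t)).card := by
      refine le_trans (Finset.card_le_card ?_) Finset.card_biUnion_le
      intro x hx
      obtain ⟨t, ht, hxt⟩ := hcov x hx
      exact Finset.mem_biUnion.2 ⟨t, ht, Finset.mem_filter.2 ⟨hx, hxt⟩⟩
    set f := (bxF L Q).card
    set k := ps.length
    have hpP2 : p ^ 2 ≤ P ^ 2 := Nat.pow_le_pow_left hpP 2
    have hfin : ∑ t ∈ T, ((bxF (L ⊓ K2 F p t) (Q * p)).card + k * P ^ 2) ≤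
        c0 d n * p ^ (n - 1) * (f + (k + 1) * P ^ 2) := by
      rw [Finset.sum_add_distrib, Finset.sum_const, smul_eq_mul]
      calc _ ≤ (2 * d * p ^ (n - 1)) * (3 ^ (n + 1) * f) +
            p ^ (n - 1) * ((2 * n + 5) ^ (n + 1) * P ^ 2 + 3 ^ (n + 1) * d * f) +
            (2 * d * p ^ (n - 1)) * (k * P ^ 2) := by
            refine Nat.add_le_add (hsum.trans ?_) (Nat.mul_le_mul_right _ hTc)
            gcongr
        _ = p ^ (n - 1) * (3 ^ (n + 1) * (3 * d) * f + (2 * n + 5) ^ (n + 1) * P ^ 2 +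
            2 * d * (k * P ^ 2)) := by ring
        _ ≤ p ^ (n - 1) * (c0 d n * (f + (k + 1) * P ^ 2)) := by
            apply Nat.mul_le_mul_left
            simp only [c0]
            generalize 3 ^ (n + 1) * (3 * d) = a
            generalize (2 * n + 5) ^ (n + 1) = b
            generalize 2 * d = c
            have e : (b + a + c) * (f + (k + 1) * P ^ 2) = (a * f + b * P ^ 2 + c * (k * P ^ 2)) +
              ((b + c) * f + (a + c) * P ^ 2 + (a + b) * (k * P ^ 2)) := by ring
            rw [e]; exact Nat.le_add_right _ _
        _ = _ := by ring
    calc S.card ≤ _ := hSle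
      _ ≤ ∑ t ∈ T, c0 d n ^ k * ps.prod ^ (n - 1) *
          ((bxF (L ⊓ K2 F p t) (Q * p)).card + k * P ^ 2) := Finset.sum_le_sum hchild
      _ = c0 d n ^ k * ps.prod ^ (n - 1) *
          ∑ t ∈ T, ((bxF (L ⊓ K2 F p t) (Q * p)).card + k * P ^ 2) := by rw [Finset.mul_sum]
      _ ≤ c0 d n ^ k * ps.prod ^ (n - 1) * (c0 d n * p ^ (n - 1) * (f + (k + 1) * P ^ 2)) :=
          Nat.mul_le_mul_left _ hfin
      _ = _ := by
          rw [List.length_cons, List.prod_cons, pow_succ, mul_pow]; ring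

theorem recur_top {n d : ℕ} (hn : 1 ≤ n) {F : MvPolynomial (Fin (n + 1)) ℤ} (hF : F.IsHomogeneous d)
    (P : ℕ) (ps : List ℕ) (hps : ∀ p ∈ ps, p.Prime ∧ GoodP F d p ∧ p ≤ P) (hnd : ps.Nodup)
    (S : Finset (Fin (n + 1) → ℤ)) (hS : ∀ x ∈ S, eval x F = 0 ∧ (∀ p ∈ ps, red p x ≠ 0) ∧
      ∀ i, |x i| ≤ ((ps.prod : ℕ) : ℤ)) :
    S.card ≤ c0 d n ^ ps.length * ps.prod ^ (n - 1) * (3 ^ (n + 1) + ps.length * P ^ 2) := by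
  have := recur hn hF P ps hps hnd ⊤ 1 one_pos (by simp) (by simp) (by simp) S
    (fun x hx => ⟨trivial, (hS x hx).1, (hS x hx).2.1, by simpa using (hS x hx).2.2⟩)
  refine this.trans ?_
  gcongr
  simpa using card_bxF_le (⊤ : AddSubgroup (Fin (n + 1) → ℤ)) 1
end

section
open MvPolynomial

lemma sz_card {n d p : ℕ} [Fact p.Prime] {G : MvPolynomial (Fin (n + 1)) (ZMod p)} (hG : G ≠ 0)
    (hd : G.IsHomogeneous d) :
    Nat.card {u : Fin (n + 1) → ZMod p // eval u G = 0} ≤ d * p ^ n := by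
  classical
  have hp : p.Prime := Fact.out
  have h := schwartz_zippel_totalDegree hG (Finset.univ : Finset (ZMod p))
  rw [hd.totalDegree hG] at h
  simp only [Fintype.piFinset_univ, Finset.card_univ, ZMod.card] at h
  rw [Nat.card_eq_fintype_card, Fintype.card_subtype]
  have hp0 : (0 : ℚ≥0) < p := by exact_mod_cast hp.pos
  rw [div_le_div_iff₀ (by positivity) hp0] at h
  have h2 : (Finset.univ.filter (fun u : Fin (n + 1) → ZMod p => eval u G = 0)).card * p
      ≤ d * p ^ n * p := by
    have : (((Finset.univ.filter (fun u : Fin (n + 1) → ZMod p => eval u G = 0)).card * p : ℕ) : ℚ≥0)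
      ≤ ((d * p ^ n * p : ℕ) : ℚ≥0) := by
      push_cast
      rw [mul_assoc, ← pow_succ]; exact h
    exact_mod_cast this
  exact Nat.le_of_mul_le_mul_right h2 hp.pos

lemma sub_subst_mem {σ k : Type*} [CommRing k] (s : σ → MvPolynomial σ k)
    (I : Ideal (MvPolynomial σ k)) (h : ∀ i, X i - s i ∈ I) (f : MvPolynomial σ k) :
    f - aeval s f ∈ I := by
  rw [← Ideal.Quotient.eq]
  have : (Ideal.Quotient.mkₐ k I).comp (AlgHom.id k _) = (Ideal.Quotient.mkₐ k I).comp (aeval s) := by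
    ext i
    simp only [AlgHom.comp_apply, AlgHom.id_apply, aeval_X]
    exact Ideal.Quotient.eq.2 (h i)
  exact congrArg (fun g => g f) this

lemma subst_ne_zero {n d : ℕ} (hn : 2 ≤ n) (hd : 2 ≤ d) {k : Type*} [Field k]
    {G : MvPolynomial (Fin (n + 1)) k} (hG : G.IsHomogeneous d) (D : ℕ)
    (hD : ∀ j, X j ^ D ∈ Ideal.span (Set.range fun i => pderiv i G))
    (j : Fin (n + 1)) (b : Fin (n + 1) → k) (hb : b j = 0) :
    aeval (fun i => if i = j then ∑ i, C (b i) * X i else X i) G ≠ 0 := by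
  classical
  intro h0
  set ℓ : MvPolynomial (Fin (n + 1)) k := ∑ i, C (b i) * X i with hℓ
  set s : Fin (n + 1) → MvPolynomial (Fin (n + 1)) k := fun i => if i = j then ℓ else X i with hs
  set σ := aeval (R := k) s with hσ
  have hσℓ : σ ℓ = ℓ := by
    simp only [hℓ, map_sum, map_mul]
    refine Finset.sum_congr rfl fun i _ => ?_
    by_cases hij : i = j
    · subst hij; simp [hb]
    · rw [hσ, aeval_X]; simp [hs, hij]
  have hmem : G - σ G ∈ Ideal.span {X j - ℓ} := by
    apply sub_subst_mem
    intro i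
    by_cases hij : i = j
    · subst hij; simp only [hs, if_true]; exact Ideal.mem_span_singleton_self _
    · simp [hs, hij]
  rw [h0, sub_zero, Ideal.mem_span_singleton] at hmem
  obtain ⟨H, hH⟩ := hmem
  have hσL : σ (X j - ℓ) = 0 := by
    rw [map_sub, hσℓ, hσ, aeval_X]; simp [hs]
  have hder : ∀ i, pderiv i G = pderiv i (X j - ℓ) * H + (X j - ℓ) * pderiv i H := by
    intro i; rw [hH, pderiv_mul]
  have hev : eval 0 (X j - ℓ) = 0 := by simp [hℓ]
  have hdℓ : pderiv j (X j - ℓ) = 1 := by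
    rw [map_sub, pderiv_X_self, hℓ, map_sum, Finset.sum_eq_zero, sub_zero]
    intro i _
    by_cases hij : i = j
    · subst hij; simp [hb]
    · rw [pderiv_C_mul, pderiv_X_of_ne hij, mul_zero]
  have hH0 : eval 0 H = 0 := by
    have h1 := congrArg (eval (0 : Fin (n + 1) → k)) (hder j)
    rw [hdℓ, map_add, map_mul, map_mul, hev, map_one, one_mul, zero_mul, add_zero] at h1
    rw [← h1]
    have := eval_smul_hom (hG.pderiv (i := j)) (0 : k) 0
    rw [zero_pow (by omega), zero_mul] at this
    simpa using this
  have hdvd : ∀ i, σ H ∣ σ (X i ^ D) := by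
    intro i
    have h1 : Ideal.span (Set.range fun i => pderiv i G) ≤ (Ideal.span {σ H}).comap σ := by
      rw [Ideal.span_le]
      rintro _ ⟨i, rfl⟩
      show σ (pderiv i G) ∈ Ideal.span {σ H}
      rw [hder i, map_add, map_mul, map_mul, hσL, zero_mul, add_zero]
      exact Ideal.mem_span_singleton.2 (dvd_mul_left _ _)
    exact Ideal.mem_span_singleton.1 (h1 (hD i))
  obtain ⟨i1, i2, h1j, h2j, h12⟩ : ∃ i1 i2 : Fin (n + 1), i1 ≠ j ∧ i2 ≠ j ∧ i1 ≠ i2 := by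
    have h1 : 1 < (Finset.univ.erase j).card := by
      rw [Finset.card_erase_of_mem (Finset.mem_univ _)]; simp; omega
    obtain ⟨a, ha, b, hb, hab⟩ := Finset.one_lt_card.1 h1
    exact ⟨a, b, (Finset.mem_erase.1 ha).1, (Finset.mem_erase.1 hb).1, hab⟩
  have hX : ∀ i, i ≠ j → σ (X i ^ D) = X i ^ D := by
    intro i hi
    rw [map_pow, hσ, aeval_X]; simp [hs, hi]
  have d1 := hdvd i1
  have d2 := hdvd i2
  rw [hX _ h1j] at d1
  rw [hX _ h2j] at d2
  obtain ⟨e, _, he⟩ := (dvd_prime_pow (X_prime (R := k) (i := i1)) D).1 d1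
  have hunit : IsUnit (σ H) := by
    rcases Nat.eq_zero_or_pos e with rfl | hpos
    · rw [pow_zero] at he
      exact (associated_one_iff_isUnit).1 he
    · exfalso
      have d3 : (X i1 : MvPolynomial (Fin (n + 1)) k) ∣ X i2 ^ D :=
        ((dvd_pow_self _ hpos.ne').trans he.symm.dvd).trans d2
      have d4 := (X_prime (R := k) (i := i1)).dvd_of_dvd_pow d3
      obtain ⟨q, hq⟩ := d4
      have := congrArg (eval (fun i => if i = i2 then (1 : k) else 0)) hq
      simp [h12] at this
  have hu2 := hunit.map (eval (0 : Fin (n + 1) → k))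
  have : eval (0 : Fin (n + 1) → k) (σ H) = eval 0 H := by
    rw [hσ, ← coe_aeval_eq_eval]
    show ((aeval (0 : Fin (n + 1) → k)).comp (aeval s)) H = aeval 0 H
    congr 1
    ext i
    by_cases hij : i = j
    · simp [hs, hij, hℓ]
    · simp [hs, hij]
  rw [this, hH0] at hu2
  exact not_isUnit_zero hu2

lemma good_field {n d p : ℕ} (hn : 2 ≤ n) (hd : 2 ≤ d) [Fact p.Prime]
    {F : MvPolynomial (Fin (n + 1)) ℤ} (hF : F.IsHomogeneous d) (Δ : ℤ) (D : ℕ)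
    (hD : ∀ j, C Δ * X j ^ D ∈ Ideal.span (Set.range fun i => pderiv i F))
    (hp : ¬ (p : ℤ) ∣ Δ) : GoodP F d p := by
  classical
  have hpp : p.Prime := Fact.out
  let φ := Int.castRingHom (ZMod p)
  set G := map φ F with hGdef
  have hG : G.IsHomogeneous d := hF.map φ
  have hΔ : (Δ : ZMod p) ≠ 0 := by rwa [Ne, ZMod.intCast_zmod_eq_zero_iff_dvd]
  have hae : ∀ (u : Fin (n + 1) → ZMod p) (f : MvPolynomial (Fin (n + 1)) ℤ),
      aeval u f = eval u (map φ f) := by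
    intro u f
    rw [eval_map]; rfl
  have hDG : ∀ j, X j ^ D ∈ Ideal.span (Set.range fun i => pderiv i G) := by
    intro j
    have h1 := Ideal.mem_map_of_mem (map φ) (hD j)
    rw [Ideal.map_span, ← Set.range_comp] at h1
    have h2 : (⇑(map φ) ∘ fun i => pderiv i F) = fun i => pderiv i G := by
      ext1 i; simp [hGdef, pderiv_map]
    rw [h2, map_mul, map_pow, map_X, map_C] at h1
    have h3 := Ideal.mul_mem_left _ (C ((Δ : ZMod p)⁻¹)) h1
    rw [← mul_assoc, ← C_mul] at h3
    simpa [φ, hΔ] using h3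
  have hG0 : G ≠ 0 := by
    intro h
    have := hDG 0
    rw [h] at this
    simp at this
  refine ⟨?_, ?_, ?_⟩
  · intro u hu
    by_contra! hcon
    apply hu
    ext j
    have h1 : Ideal.span (Set.range fun i => pderiv i G) ≤ RingHom.ker (eval u) := by
      rw [Ideal.span_le]
      rintro _ ⟨i, rfl⟩
      have := hcon i
      rw [hae, ← pderiv_map] at this
      exact this
    have h2 := h1 (hDG j)
    rw [RingHom.mem_ker, map_pow, eval_X] at h2
    exact eq_zero_of_pow_eq_zero h2
  · intro a ha
    obtain ⟨j, hj⟩ := Function.ne_iff.1 ha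
    have hj : a j ≠ 0 := hj
    let b : Fin (n + 1) → ZMod p := fun i => if i = j then 0 else - (a j)⁻¹ * a i
    have hne := subst_ne_zero hn hd hG D hDG j b (by simp [b])
    set G' := aeval (fun i => if i = j then ∑ i, C (b i) * X i else X i) G with hG'
    have hG'h : G'.IsHomogeneous d := by
      have := hG.aeval (fun i => if i = j then ∑ i, C (b i) * X i else X i) (n := 1) (by
        intro i
        by_cases hij : i = j
        · simp only [hij, if_true]
          refine IsHomogeneous.sum _ _ _ fun i _ => ?_
          simpa using (isHomogeneous_C _ (b i)).mul (isHomogeneous_X _ i)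
        · simp only [hij, if_false]; exact isHomogeneous_X _ i)
      rwa [one_mul] at this
    have h1 := sz_card hne hG'h
    have hlin : ∀ u : Fin (n + 1) → ZMod p, ∑ i, a i * u i = 0 → ∑ i, b i * u i = u j := by
      intro u hu
      have e1 : ∑ i, b i * u i = ∑ i, (- (a j)⁻¹ * (a i * u i) + if i = j then u j else 0) := by
        refine Finset.sum_congr rfl fun i _ => ?_
        by_cases hij : i = j
        · subst hij; simp only [b, if_true]; field_simp; ring
        · simp only [b, hij, if_false]; ring
      rw [e1, Finset.sum_add_distrib, ← Finset.mul_sum, hu]; simp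
    have hle : Nat.card ({u : Fin (n + 1) → ZMod p // aeval u F = 0 ∧ ∑ i, a i * u i = 0} × ZMod p) ≤
        Nat.card {u : Fin (n + 1) → ZMod p // eval u G' = 0} := by
      have hup : ∀ (u : Fin (n + 1) → ZMod p) c, ∑ i, b i * Function.update u j c i = ∑ i, b i * u i := by
        intro u c
        refine Finset.sum_congr rfl fun i _ => ?_
        by_cases hij : i = j
        · subst hij; simp [b]
        · rw [Function.update_of_ne hij]
      refine Nat.card_le_card_of_injective (fun q => ⟨Function.update q.1.1 j q.2, ?_⟩) ?_
      · obtain ⟨⟨u, hu1, hu2⟩, c⟩ := q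
        rw [hG', ← coe_aeval_eq_eval]
        show ((aeval (Function.update u j c)).comp (aeval _)) G = 0
        rw [comp_aeval]
        have : (fun i => aeval (Function.update u j c) (if i = j then ∑ i, C (b i) * X i else X i : MvPolynomial (Fin (n + 1)) (ZMod p))) = u := by
          ext i
          by_cases hij : i = j
          · subst hij
            simp only [if_true, map_sum, map_mul, aeval_X, algHom_C]
            exact (hup u c).trans (hlin u hu2)
          · simp [hij]
        rw [this]
        rw [hae] at hu1
        exact hu1
      · rintro ⟨⟨u, hu1, hu2⟩, c⟩ ⟨⟨u', hu1', hu2'⟩, c'⟩ h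
        simp only [Subtype.mk.injEq] at h
        have hc : c = c' := by simpa using congrFun h j
        subst hc
        have : u = u' := by
          ext i
          by_cases hij : i = j
          · subst hij
            rw [← hlin u hu2, ← hlin u' hu2', ← hup u c, h, hup u' c]
          · have := congrFun h i
            rwa [Function.update_of_ne hij, Function.update_of_ne hij] at this
        subst this; rfl
    rw [Nat.card_prod, Nat.card_zmod] at hle
    have h5 : p ^ n = p ^ (n - 1) * p := by
      rw [← pow_succ]; congr 1; omega
    have h6 := hle.trans h1
    rw [h5, ← mul_assoc] at h6
    exact Nat.le_of_mul_le_mul_right h6 hpp.pos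
  · have := sz_card hG0 hG
    simpa only [hae] using this
end

section
open MvPolynomial

/-- exponents of degree `d` -/
abbrev Ex (m d : ℕ) : Type :=
  {s : Fin m →₀ ℕ // s ∈ Finset.finsuppAntidiag (Finset.univ : Finset (Fin m)) d}

lemma Ex.degree {m d : ℕ} (e : Ex m d) : Finsupp.degree e.1 = d := by
  have := (Finset.mem_finsuppAntidiag.1 e.2).1
  rw [Finsupp.degree_eq_sum]; exact this

lemma mem_Ex {m d : ℕ} {s : Fin m →₀ ℕ} :
    s ∈ Finset.finsuppAntidiag (Finset.univ : Finset (Fin m)) d ↔ Finsupp.degree s = d := by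
  rw [Finset.mem_finsuppAntidiag, Finsupp.degree_eq_sum]
  simp

/-- the form with given coefficients -/
noncomputable def polyOf {m d : ℕ} {A : Type*} [CommRing A] (c : Ex m d → A) : MvPolynomial (Fin m) A :=
  ∑ e : Ex m d, monomial e.1 (c e)

lemma coeff_polyOf {m d : ℕ} {A : Type*} [CommRing A] (c : Ex m d → A) (e : Ex m d) :
    coeff e.1 (polyOf c) = c e := by
  classical
  rw [polyOf, coeff_sum, Finset.sum_eq_single e]
  · simp
  · intro b _ hb
    rw [coeff_monomial, if_neg]
    intro h; exact hb (Subtype.ext h)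
  · simp

lemma polyOf_hom {m d : ℕ} {A : Type*} [CommRing A] (c : Ex m d → A) :
    (polyOf c).IsHomogeneous d :=
  IsHomogeneous.sum _ _ _ fun e _ => isHomogeneous_monomial _ e.degree

lemma eq_polyOf {m d : ℕ} {A : Type*} [CommRing A] {F : MvPolynomial (Fin m) A}
    (hF : F.IsHomogeneous d) : F = polyOf (fun e : Ex m d => coeff e.1 F) := by
  ext s
  by_cases hs : Finsupp.degree s = d
  · exact (coeff_polyOf (fun e : Ex m d => coeff e.1 F) ⟨s, mem_Ex.2 hs⟩).symm
  · rw [hF.coeff_eq_zero hs, (polyOf_hom _).coeff_eq_zero hs]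

lemma map_polyOf {m d : ℕ} {A A' : Type*} [CommRing A] [CommRing A'] (φ : A →+* A') (c : Ex m d → A) :
    map φ (polyOf c) = polyOf (fun e => φ (c e)) := by
  simp [polyOf, map_sum, map_monomial]

lemma hom_comp_mul {m a b : ℕ} {A : Type*} [CommRing A] (g f : MvPolynomial (Fin m) A)
    (hf : f.IsHomogeneous b) :
    homogeneousComponent (a + b) (g * f) = homogeneousComponent a g * f := by
  classical
  ext s
  rw [coeff_homogeneousComponent]
  split_ifs with hs
  · rw [coeff_mul, coeff_mul]
    refine Finset.sum_congr rfl fun x hx => ?_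
    rw [coeff_homogeneousComponent]
    split_ifs with h
    · rfl
    · rw [Finset.HasAntidiagonal.mem_antidiagonal] at hx
      have : Finsupp.degree x.2 ≠ b := by
        intro h2
        apply h
        rw [← hx, map_add, h2] at hs
        omega
      rw [hf.coeff_eq_zero this, mul_zero, mul_zero]
  · exact (((homogeneousComponent_isHomogeneous a g).mul hf).coeff_eq_zero hs).symm

/-- the Jacobian ideal -/
noncomputable def Jac {m : ℕ} {A : Type*} [CommRing A] (F : MvPolynomial (Fin m) A) : Ideal (MvPolynomial (Fin m) A) :=
  Ideal.span (Set.range fun i => pderiv i F)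

lemma Jac_map {m : ℕ} {A A' : Type*} [CommRing A] [CommRing A'] (φ : A →+* A')
    (F : MvPolynomial (Fin m) A) {f : MvPolynomial (Fin m) A} (hf : f ∈ Jac F) :
    map φ f ∈ Jac (map φ F) := by
  have h1 := Ideal.mem_map_of_mem (map φ) hf
  rw [Jac, Ideal.map_span, ← Set.range_comp] at h1
  have h2 : (⇑(map φ) ∘ fun i => pderiv i F) = fun i => pderiv i (map φ F) := by
    ext1 i; simp [pderiv_map]
  rw [h2] at h1
  exact h1

/-- the ideal of inertia forms -/
noncomputable def inertia (m d : ℕ) : Ideal (MvPolynomial (Ex m d) ℤ) where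
  carrier := {r | ∃ D : ℕ, ∀ j, C r * X j ^ D ∈ Jac (polyOf (fun e : Ex m d => (X e : MvPolynomial (Ex m d) ℤ)))}
  zero_mem' := ⟨0, fun j => by simp⟩
  add_mem' := by
    rintro a b ⟨D, hD⟩ ⟨D', hD'⟩
    refine ⟨D + D', fun j => ?_⟩
    have : C (a + b) * X j ^ (D + D') = X j ^ D' * (C a * X j ^ D) + X j ^ D * (C b * X j ^ D') := by
      rw [C_add, pow_add]; ring
    rw [this]
    exact Ideal.add_mem _ (Ideal.mul_mem_left _ _ (hD j)) (Ideal.mul_mem_left _ _ (hD' j))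
  smul_mem' := by
    rintro c a ⟨D, hD⟩
    refine ⟨D, fun j => ?_⟩
    rw [smul_eq_mul, C_mul, mul_assoc]
    exact Ideal.mul_mem_left _ _ (hD j)

lemma nullst {n : ℕ} {F : MvPolynomial (Fin (n + 1)) ℤ} (hF : NonsingularZ F) (j : Fin (n + 1)) :
    ∃ (D : ℕ) (s : ℤ), s ≠ 0 ∧ C s * X j ^ D ∈ Jac F := by
  let φ := algebraMap ℤ ℚ
  have h1 : (X j : MvPolynomial (Fin (n + 1)) ℚ) ∈ (Jac (map φ F)).radical := by
    rw [← vanishingIdeal_zeroLocus_eq_radical (K := KK)]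
    intro z hz
    have : z = 0 := by
      apply hF
      intro i
      have h2 := hz (pderiv i (map φ F)) (Ideal.subset_span ⟨i, rfl⟩)
      rw [pderiv_map, aeval_map_algebraMap] at h2
      exact h2
    simp [this]
  obtain ⟨D, hD⟩ := h1
  rw [Jac, Ideal.mem_span_range_iff_exists_fun] at hD
  obtain ⟨g, hg⟩ := hD
  let _ : Algebra (MvPolynomial (Fin (n + 1)) ℤ) (MvPolynomial (Fin (n + 1)) ℚ) := algebraMvPolynomial
  obtain ⟨b, hb⟩ := IsLocalization.exist_integer_multiples_of_finite
    ((nonZeroDivisors ℤ).map (C (σ := Fin (n + 1)))) g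
  obtain ⟨b, s, hs, rfl⟩ := b
  have hs0 : s ≠ 0 := nonZeroDivisors.ne_zero hs
  choose h hh using hb
  refine ⟨D, s, hs0, ?_⟩
  rw [Jac, Ideal.mem_span_range_iff_exists_fun]
  refine ⟨h, ?_⟩
  have hinj : Function.Injective (map φ : MvPolynomial (Fin (n + 1)) ℤ → MvPolynomial (Fin (n + 1)) ℚ) :=
    map_injective _ (algebraMap ℤ ℚ).injective_int
  apply hinj
  have hh' : ∀ i, map φ (h i) = map φ (C s) * g i := by
    intro i
    have := hh i
    rw [Algebra.smul_def] at this
    exact this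
  rw [map_sum]
  simp only [map_mul, hh', map_pow, map_X]
  rw [← hg, Finset.mul_sum]
  refine Finset.sum_congr rfl fun i _ => ?_
  rw [pderiv_map]; ring

lemma nullst_mon {n d : ℕ} (c : Ex (n + 1) d → ℤ) (hF : NonsingularZ (polyOf c)) :
    ∃ N' : ℕ, ∀ β : Ex (n + 1) (N' + (d - 1)), ∃ s : ℤ, s ≠ 0 ∧
      ∃ h : Fin (n + 1) → MvPolynomial (Fin (n + 1)) ℤ, (∀ i, (h i).IsHomogeneous N') ∧
        ∑ i, h i * pderiv i (polyOf c) = monomial β.1 s := by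
  choose D s hs0 hD using fun j => nullst hF j
  refine ⟨∑ j, D j, fun β => ?_⟩
  obtain ⟨j, hj⟩ : ∃ j, D j ≤ β.1 j := by
    by_contra! hcon
    have h1 : ∑ j, β.1 j = (∑ j, D j) + (d - 1) := (Finset.mem_finsuppAntidiag.1 β.2).1
    have h2 : ∑ j, β.1 j < ∑ j, D j :=
      Finset.sum_lt_sum_of_nonempty Finset.univ_nonempty fun j _ => hcon j
    omega
  refine ⟨s j, hs0 j, ?_⟩
  have h1 : monomial β.1 (s j) ∈ Jac (polyOf c) := by
    have : monomial β.1 (s j) = monomial (β.1 - Finsupp.single j (D j)) 1 * (C (s j) * X j ^ D j) := by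
      rw [X_pow_eq_monomial, C_mul_monomial, monomial_mul, mul_one, one_mul, tsub_add_cancel_of_le]
      rwa [Finsupp.single_le_iff]
    rw [this]
    exact Ideal.mul_mem_left _ _ (hD j)
  rw [Jac, Ideal.mem_span_range_iff_exists_fun] at h1
  obtain ⟨g, hg⟩ := h1
  refine ⟨fun i => homogeneousComponent (∑ j, D j) (g i),
    fun i => homogeneousComponent_isHomogeneous _ _, ?_⟩
  have h2 := congrArg (homogeneousComponent (∑ j, D j + (d - 1))) hg
  rw [map_sum] at h2
  rw [homogeneousComponent_of_mem (isHomogeneous_monomial _ β.degree), if_pos rfl] at h2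
  rw [← h2]
  exact Finset.sum_congr rfl fun i _ => (hom_comp_mul _ _ (polyOf_hom c).pderiv).symm

lemma exists_inertia {n d : ℕ} (c : Ex (n + 1) d → ℤ) (hF : NonsingularZ (polyOf c)) :
    ∃ δ ∈ inertia (n + 1) d, eval c δ ≠ 0 := by
  classical
  obtain ⟨N', hN⟩ := nullst_mon c hF
  set N := N' + (d - 1) with hNdef
  choose s hs0 h hhom hsum using hN
  let R := MvPolynomial (Ex (n + 1) d) ℤ
  let G : MvPolynomial (Fin (n + 1)) R := polyOf (fun e : Ex (n + 1) d => (X e : R))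
  let P : Ex (n + 1) N → MvPolynomial (Fin (n + 1)) R := fun β =>
    ∑ i, map (C : ℤ →+* R) (h β i) * pderiv i G
  have hPJ : ∀ β, P β ∈ Jac G := fun β =>
    Ideal.sum_mem _ fun i _ => Ideal.mul_mem_left _ _ (Ideal.subset_span ⟨i, rfl⟩)
  have hPh : ∀ β, (P β).IsHomogeneous N := fun β =>
    IsHomogeneous.sum _ _ _ fun i _ => ((hhom β i).map _).mul (polyOf_hom _).pderiv
  let A : Matrix (Ex (n + 1) N) (Ex (n + 1) N) R := fun β γ => coeff γ.1 (P β)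
  have hPA : ∀ β, P β = polyOf (A β) := fun β => eq_polyOf (hPh β)
  have hGc : map (eval c) G = polyOf c := by
    rw [map_polyOf]; simp
  have hPc : ∀ β, map (eval c) (P β) = monomial β.1 (s β) := by
    intro β
    rw [← hsum β]
    simp only [P, map_sum, map_mul]
    refine Finset.sum_congr rfl fun i _ => ?_
    have hid : (eval c).comp (C : ℤ →+* R) = RingHom.id ℤ := Subsingleton.elim _ _
    rw [← pderiv_map, hGc, map_map, hid, map_id]
  have hAc : (eval c).mapMatrix A = Matrix.diagonal s := by
    ext β γ
    rw [RingHom.mapMatrix_apply, Matrix.map_apply]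
    show eval c (coeff γ.1 (P β)) = _
    rw [← coeff_map, hPc, coeff_monomial, Matrix.diagonal_apply]
    by_cases hβ : β = γ
    · subst hβ; rw [if_pos rfl, if_pos rfl]
    · rw [if_neg hβ, if_neg]
      intro h; exact hβ (Subtype.ext h)
  refine ⟨A.det, ?_, ?_⟩
  · refine ⟨N, fun j => ?_⟩
    let γ : Ex (n + 1) N := ⟨Finsupp.single j N, mem_Ex.2 (by simp)⟩
    have h1 : C A.det * X j ^ N = ∑ β, C (A.adjugate γ β) * P β := by
      have h2 : ∀ β, C (A.adjugate γ β) * P β = ∑ e, monomial e.1 (A.adjugate γ β * A β e) := by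
        intro β
        rw [hPA β, polyOf, Finset.mul_sum]
        exact Finset.sum_congr rfl fun e _ => by rw [C_mul_monomial]
      simp only [h2]
      rw [Finset.sum_comm]
      have h3 : ∀ e : Ex (n + 1) N, ∑ β, monomial e.1 (A.adjugate γ β * A β e) =
          monomial e.1 (if γ = e then A.det else 0) := by
        intro e
        rw [← map_sum]
        congr 1
        have := congrFun (congrFun (Matrix.adjugate_mul A) γ) e
        rw [Matrix.mul_apply] at this
        rw [this]
        simp [Matrix.one_apply]
      simp only [h3]
      rw [Finset.sum_eq_single γ]
      · rw [X_pow_eq_monomial, C_mul_monomial]; simp [γ]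
      · intro b _ hb; simp [hb.symm]
      · simp
    rw [h1]
    exact Ideal.sum_mem _ fun β _ => Ideal.mul_mem_left _ _ (hPJ β)
  · rw [RingHom.map_det, hAc, Matrix.det_diagonal]
    exact Finset.prod_ne_zero_iff.2 fun β _ => hs0 β

theorem cert (n d : ℕ) : ∃ T : Finset (MvPolynomial (Ex (n + 1) d) ℤ),
    (∀ r ∈ T, ∀ c : Ex (n + 1) d → ℤ, ∃ D : ℕ, ∀ j, C (eval c r) * X j ^ D ∈ Jac (polyOf c)) ∧
    ∀ c : Ex (n + 1) d → ℤ, NonsingularZ (polyOf c) → ∃ r ∈ T, eval c r ≠ 0 := by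
  obtain ⟨T, hT⟩ := (isNoetherianRing_iff_ideal_fg _).1
    (inferInstance : IsNoetherianRing (MvPolynomial (Ex (n + 1) d) ℤ)) (inertia (n + 1) d)
  refine ⟨T, ?_, ?_⟩
  · intro r hr c
    have : r ∈ inertia (n + 1) d := by rw [← hT]; exact Ideal.subset_span hr
    obtain ⟨D, hD⟩ := this
    refine ⟨D, fun j => ?_⟩
    have h1 := Jac_map (eval c) _ (hD j)
    rw [map_polyOf] at h1
    simpa using h1
  · intro c hc
    by_contra! hcon
    obtain ⟨δ, hδ, hne⟩ := exists_inertia c hc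
    rw [← hT] at hδ
    have : Ideal.span (T : Set (MvPolynomial (Ex (n + 1) d) ℤ)) ≤ RingHom.ker (eval c) := by
      rw [Ideal.span_le]; exact fun r hr => hcon r hr
    exact hne (this hδ)
end

section
open MvPolynomial

lemma sol_basis {M : Type*} [Fintype M] [DecidableEq M] (H : ℕ) (E : Finset (M → ℤ))
    (hE : ∀ a ∈ E, ∀ e, |a e| ≤ (H : ℤ)) :
    ∃ (k : ℕ) (v : M → M → ℤ), (Finset.univ.filter (fun j => v j ≠ 0)).card + k ≤ Fintype.card M ∧
      (∀ j e, |v j e| ≤ (((2 * Fintype.card M * H) ^ (2 ^ k - 1) : ℕ) : ℤ)) ∧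
      (∀ a ∈ E, ∀ j, ∑ e, a e * v j e = 0) ∧
      ∀ c : M → ℤ, (∀ a ∈ E, ∑ e, a e * c e = 0) → ∃ N : ℤ, N ≠ 0 ∧ ∃ t : M → ℤ,
        ∀ e, N * c e = ∑ j, t j * v j e := by
  induction E using Finset.induction_on with
  | empty =>
    refine ⟨0, fun j e => if j = e then 1 else 0, ?_, ?_, by simp, ?_⟩
    · rw [add_zero]; exact Finset.card_le_univ _
    · intro j e; by_cases h : j = e <;> simp [h]
    · intro c _
      exact ⟨1, one_ne_zero, c, fun e => by simp⟩
  | insert a E ha ih =>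
    obtain ⟨k, v, hk, hb, hv, hsp⟩ := ih (fun a ha => hE a (Finset.mem_insert_of_mem ha))
    by_cases hall : ∀ j, ∑ e, a e * v j e = 0
    · refine ⟨k, v, hk, hb, ?_, ?_⟩
      · intro a' ha' j
        rcases Finset.mem_insert.1 ha' with rfl | h
        · exact hall j
        · exact hv a' h j
      · intro c hc
        exact hsp c fun a ha => hc a (Finset.mem_insert_of_mem ha)
    · push Not at hall
      obtain ⟨j0, hj0⟩ := hall
      set α : M → ℤ := fun j => ∑ e, a e * v j e with hα
      have hj0' : α j0 ≠ 0 := hj0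
      refine ⟨k + 1, fun j e => α j0 * v j e - α j * v j0 e, ?_, ?_, ?_, ?_⟩
      · have hsub : Finset.univ.filter (fun j => (fun e => α j0 * v j e - α j * v j0 e) ≠ 0) ⊂
            Finset.univ.filter (fun j => v j ≠ 0) := by
          rw [Finset.ssubset_iff_of_subset]
          · refine ⟨j0, ?_, ?_⟩
            · simp only [Finset.mem_filter, Finset.mem_univ, true_and]
              intro h
              apply hj0
              simp [h]
            · simp only [Finset.mem_filter, Finset.mem_univ, true_and, not_not]
              ext e; simp
          · intro j hj
            simp only [Finset.mem_filter, Finset.mem_univ, true_and] at hj ⊢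
            intro h
            apply hj
            ext e
            simp [hα, h]
        have hlt := Finset.card_lt_card hsub
        show (Finset.univ.filter (fun j => (fun e => α j0 * v j e - α j * v j0 e) ≠ 0)).card
          + (k + 1) ≤ _
        omega
      · intro j e
        set μ := Fintype.card M
        set b : ℕ := (2 * μ * H) ^ (2 ^ k - 1) with hbdef
        have hα' : ∀ j, |α j| ≤ (μ : ℤ) * (H * b) := by
          intro j
          refine (Finset.abs_sum_le_sum_abs _ _).trans ?_
          have : ∀ e ∈ Finset.univ, |a e * v j e| ≤ ((H : ℤ) * b) := by
            intro e _
            rw [abs_mul]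
            exact mul_le_mul (hE a (Finset.mem_insert_self _ _) e) (hb j e) (abs_nonneg _) (by positivity)
          refine (Finset.sum_le_card_nsmul _ _ _ this).trans ?_
          simp [μ]
        have h1 : |α j0 * v j e| ≤ (μ : ℤ) * (H * b) * b := by
          rw [abs_mul]
          exact mul_le_mul (hα' j0) (hb j e) (abs_nonneg _) (by positivity)
        have h2 : |α j * v j0 e| ≤ (μ : ℤ) * (H * b) * b := by
          rw [abs_mul]
          exact mul_le_mul (hα' j) (hb j0 e) (abs_nonneg _) (by positivity)
        have h3 := abs_sub (α j0 * v j e) (α j * v j0 e)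
        have h4 : (2 * μ * H) ^ (2 ^ (k + 1) - 1) = (2 * μ * H) * (b * b) := by
          rw [hbdef, ← pow_add, ← pow_succ']
          congr 1
          have : 1 ≤ 2 ^ k := Nat.one_le_two_pow
          rw [pow_succ]; omega
        rw [h4]
        push_cast
        linarith
      · intro a' ha' j
        have hcomb : ∑ e, a' e * (α j0 * v j e - α j * v j0 e) =
            α j0 * (∑ e, a' e * v j e) - α j * ∑ e, a' e * v j0 e := by
          rw [Finset.mul_sum, Finset.mul_sum, ← Finset.sum_sub_distrib]
          exact Finset.sum_congr rfl fun e _ => by ring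
        rw [hcomb]
        rcases Finset.mem_insert.1 ha' with rfl | h
        · simp only [hα]; ring
        · rw [hv a' h, hv a' h]; ring
      · intro c hc
        obtain ⟨N, hN, t, ht⟩ := hsp c fun a ha => hc a (Finset.mem_insert_of_mem ha)
        refine ⟨α j0 * N, mul_ne_zero hj0' hN, t, fun e => ?_⟩
        have h0 : ∑ j, t j * α j = 0 := by
          have h1 := hc a (Finset.mem_insert_self _ _)
          have h2 : N * ∑ e, a e * c e = ∑ j, t j * α j := by
            simp only [hα, Finset.mul_sum]
            rw [Finset.sum_comm]
            refine Finset.sum_congr rfl fun e _ => ?_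
            have : N * (a e * c e) = a e * (N * c e) := by ring
            rw [this, ht e, Finset.mul_sum]
            exact Finset.sum_congr rfl fun j _ => by ring
          rw [← h2, h1, mul_zero]
        have h3 : ∑ j, t j * (α j0 * v j e - α j * v j0 e) =
            α j0 * (∑ j, t j * v j e) - (∑ j, t j * α j) * v j0 e := by
          rw [Finset.mul_sum, Finset.sum_mul, ← Finset.sum_sub_distrib]
          exact Finset.sum_congr rfl fun e _ => by ring
        rw [h3, h0, ← ht e]; ring

lemma totalDegree_subst {M : Type*} (s : M → MvPolynomial M ℤ) (hs : ∀ e, (s e).totalDegree ≤ 1)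
    (r : MvPolynomial M ℤ) : (aeval s r).totalDegree ≤ r.totalDegree := by
  rw [aeval_def, eval₂_eq]
  refine totalDegree_finsetSum_le fun d hd => ?_
  refine (totalDegree_mul _ _).trans ?_
  have h1 : (algebraMap ℤ (MvPolynomial M ℤ) (coeff d r)).totalDegree = 0 := totalDegree_C _
  rw [h1, zero_add]
  refine (totalDegree_finsetProd _ _).trans ?_
  refine le_trans (Finset.sum_le_sum fun i _ => ?_) (le_totalDegree hd)
  refine (totalDegree_pow _ _).trans ?_
  calc d i * (s i).totalDegree ≤ d i * 1 := Nat.mul_le_mul_left _ (hs i)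
    _ = d i := mul_one _

lemma eval_bound {M : Type*} (r : MvPolynomial M ℤ) (c : M → ℤ) (x : ℕ) (hx : 1 ≤ x)
    (hc : ∀ e, |c e| ≤ (x : ℤ)) :
    |eval c r| ≤ (∑ d ∈ r.support, |coeff d r|) * (x : ℤ) ^ r.totalDegree := by
  rw [eval_eq, Finset.sum_mul]
  refine (Finset.abs_sum_le_sum_abs _ _).trans (Finset.sum_le_sum fun d hd => ?_)
  rw [abs_mul]
  refine mul_le_mul_of_nonneg_left ?_ (abs_nonneg _)
  rw [Finset.abs_prod]
  calc ∏ i ∈ d.support, |c i ^ d i| ≤ ∏ i ∈ d.support, (x : ℤ) ^ d i := by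
        refine Finset.prod_le_prod (fun i _ => abs_nonneg _) fun i _ => ?_
        rw [abs_pow]
        exact pow_le_pow_left₀ (abs_nonneg _) (hc i) _
    _ = (x : ℤ) ^ (∑ i ∈ d.support, d i) := Finset.prod_pow_eq_pow_sum _ _ _
    _ ≤ (x : ℤ) ^ r.totalDegree :=
        pow_le_pow_right₀ (by exact_mod_cast hx) (le_totalDegree hd)

theorem small_coeff {M : Type*} [Fintype M] (r : MvPolynomial M ℤ) : ∃ K A : ℕ, ∀ H : ℕ, 1 ≤ H →
    ∀ E : Finset (M → ℤ), (∀ a ∈ E, ∀ e, |a e| ≤ (H : ℤ)) →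
    ∀ c : M → ℤ, (∀ a ∈ E, ∑ e, a e * c e = 0) → eval c r ≠ 0 →
    ∃ c' : M → ℤ, (∀ a ∈ E, ∑ e, a e * c' e = 0) ∧ eval c' r ≠ 0 ∧
      |eval c' r| ≤ ((K * H ^ A : ℕ) : ℤ) := by
  classical
  set μ := Fintype.card M with hμ
  set g := r.totalDegree with hg
  set W : ℕ := ∑ d ∈ r.support, (coeff d r).natAbs with hW
  refine ⟨W * (μ * g * (2 * μ + 1) ^ (2 ^ μ) + 1) ^ g, 2 ^ μ * g, ?_⟩
  intro H hH E hE c hc hne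
  obtain ⟨k, v, hk, hb, hv, hsp⟩ := sol_basis H E hE
  obtain ⟨N, hN, t, ht⟩ := hsp c hc
  let s : M → MvPolynomial M ℤ := fun e => ∑ j, C (v j e) * X j
  have hs : ∀ e, (s e).totalDegree ≤ 1 := by
    intro e
    refine totalDegree_finsetSum_le fun j _ => ?_
    refine (totalDegree_mul _ _).trans ?_
    rw [totalDegree_C, totalDegree_X]
  have hρ : aeval s r ≠ 0 := by
    intro h0
    have h1 := congrArg (aeval (fun j => (t j : ℚ) / N)) h0
    rw [map_zero] at h1
    have h2 : aeval (fun j => (t j : ℚ) / N) (aeval s r) = aeval (fun e => (c e : ℚ)) r := by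
      rw [← AlgHom.comp_apply, comp_aeval]
      congr 2
      ext e
      simp only [s, map_sum, map_mul, aeval_X, algHom_C]
      have hNq : (N : ℚ) ≠ 0 := by exact_mod_cast hN
      have := ht e
      have h3 : (N : ℚ) * c e = ∑ j, (t j : ℚ) * v j e := by exact_mod_cast this
      rw [eq_comm, ← mul_right_inj' hNq, h3, Finset.mul_sum]
      refine Finset.sum_congr rfl fun j _ => ?_
      simp only [algebraMap_int_eq, eq_intCast]
      field_simp
    rw [h2] at h1
    have h4 : aeval (fun e => (c e : ℚ)) r = ((eval c r : ℤ) : ℚ) := by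
      clear * -
      induction r using MvPolynomial.induction_on with
      | C a => simp
      | add f g hf hg => simp [hf, hg]
      | mul_X f j hf => simp [hf]
    rw [h4] at h1
    exact hne (by exact_mod_cast h1)
  obtain ⟨x, hx, hxne⟩ : ∃ x : M → ℤ, (∀ j, x j ∈ (Finset.Icc (0 : ℤ) g)) ∧ eval x (aeval s r) ≠ 0 := by
    by_contra! hcon
    apply hρ
    refine eq_zero_of_eval_zero_at_prod_finset _ (fun _ => Finset.Icc (0 : ℤ) g) ?_ hcon
    intro i
    have h1 := (degreeOf_le_totalDegree (aeval s r) i).trans (totalDegree_subst s hs r)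
    rw [Int.card_Icc]
    omega
  have hev : eval x (aeval s r) = eval (fun e => ∑ j, x j * v j e) r := by
    rw [← coe_aeval_eq_eval, ← coe_aeval_eq_eval]
    show ((aeval x).comp (aeval s)) r = aeval _ r
    rw [comp_aeval]
    congr 2
    ext e
    simp only [s, map_sum, map_mul, aeval_X, algHom_C]
    refine Finset.sum_congr rfl fun j _ => ?_
    simp [mul_comm]
  set b : ℕ := (2 * μ + 1) ^ (2 ^ μ) * H ^ (2 ^ μ) with hbd
  have hvb : ∀ j e, |v j e| ≤ (b : ℤ) := by
    intro j e
    refine (hb j e).trans ?_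
    have h2 : (2 * μ * H) ^ (2 ^ k - 1) ≤ b := by
      rw [hbd, ← mul_pow]
      calc (2 * μ * H) ^ (2 ^ k - 1) ≤ ((2 * μ + 1) * H) ^ (2 ^ k - 1) := by gcongr; omega
        _ ≤ ((2 * μ + 1) * H) ^ (2 ^ μ) := by
          apply Nat.pow_le_pow_right
          · positivity
          · have : 2 ^ k ≤ 2 ^ μ := Nat.pow_le_pow_right (by norm_num) (le_trans (Nat.le_add_left _ _) hk)
            exact (Nat.sub_le _ _).trans this
    exact_mod_cast h2
  refine ⟨fun e => ∑ j, x j * v j e, ?_, by rwa [← hev], ?_⟩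
  · intro a ha
    have : ∑ e, a e * ∑ j, x j * v j e = ∑ j, x j * ∑ e, a e * v j e := by
      simp only [Finset.mul_sum]
      rw [Finset.sum_comm]
      exact Finset.sum_congr rfl fun j _ => Finset.sum_congr rfl fun e _ => by ring
    rw [this]
    exact Finset.sum_eq_zero fun j _ => by rw [hv a ha j, mul_zero]
  · have hcb : ∀ e, |∑ j, x j * v j e| ≤ ((μ * g * b + 1 : ℕ) : ℤ) := by
      intro e
      refine (Finset.abs_sum_le_sum_abs _ _).trans ?_
      have : ∀ j ∈ Finset.univ, |x j * v j e| ≤ ((g : ℤ) * b) := by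
        intro j _
        rw [abs_mul]
        have hxj := Finset.mem_Icc.1 (hx j)
        refine mul_le_mul ?_ (hvb j e) (abs_nonneg _) (by positivity)
        rw [abs_of_nonneg hxj.1]; exact hxj.2
      refine (Finset.sum_le_card_nsmul _ _ _ this).trans ?_
      rw [Finset.card_univ, ← hμ, nsmul_eq_mul]
      push_cast
      linarith
    have h1 := eval_bound r _ (μ * g * b + 1) (by omega) hcb
    refine h1.trans ?_
    have hWz : (∑ d ∈ r.support, |coeff d r|) = (W : ℤ) := by
      rw [hW]; push_cast; rfl
    rw [hWz, ← hg]
    have h5 : W * (μ * g * b + 1) ^ g ≤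
        W * (μ * g * (2 * μ + 1) ^ (2 ^ μ) + 1) ^ g * H ^ (2 ^ μ * g) := by
      rw [pow_mul, mul_assoc W, ← mul_pow]
      gcongr
      rw [hbd]
      have : 1 ≤ H ^ (2 ^ μ) := Nat.one_le_pow _ _ hH
      nlinarith
    exact_mod_cast h5
end

section
open MvPolynomial

lemma primes_avail (P : ℕ) (hP : 1 ≤ P) (Δ : ℤ) (hΔ : Δ ≠ 0) (k m : ℕ) (h : Δ.natAbs < P ^ m) :
    ∃ ps : List ℕ, ps.length = k ∧ ps.Nodup ∧
      ∀ p ∈ ps, p.Prime ∧ ¬ (p : ℤ) ∣ Δ ∧ P ≤ p ∧ p ≤ 2 ^ (k + m) * P := by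
  classical
  have hB : ∀ i : ℕ, ∃ p, p.Prime ∧ 2 ^ i * P < p ∧ p ≤ 2 * (2 ^ i * P) := fun i =>
    Nat.exists_prime_lt_and_le_two_mul _ (by positivity)
  choose q hq1 hq2 hq3 using hB
  have hmono : StrictMono q := by
    refine strictMono_nat_of_lt_succ fun i => ?_
    have h1 := hq3 i
    have h2 := hq2 (i + 1)
    rw [pow_succ] at h2
    linarith
  let Q : Finset ℕ := (Finset.range (k + m)).image q
  have hQc : Q.card = k + m := by
    rw [Finset.card_image_of_injective _ hmono.injective, Finset.card_range]
  have hQ : ∀ p ∈ Q, p.Prime ∧ P ≤ p ∧ p ≤ 2 ^ (k + m) * P := by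
    intro p hp
    obtain ⟨i, hi, rfl⟩ := Finset.mem_image.1 hp
    have hi' := Finset.mem_range.1 hi
    refine ⟨hq1 i, ?_, ?_⟩
    · have h1 := hq2 i
      have h2 : 1 ≤ 2 ^ i := Nat.one_le_two_pow
      nlinarith
    · calc q i ≤ 2 ^ (i + 1) * P := by have := hq3 i; rw [pow_succ]; linarith
        _ ≤ _ := Nat.mul_le_mul_right _ (Nat.pow_le_pow_right (by norm_num) (by omega))
  have hbad : (Q.filter (fun p : ℕ => (p : ℤ) ∣ Δ)).card < m := by
    by_contra hcon
    push Not at hcon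
    have h1 : ∏ p ∈ Q.filter (fun p : ℕ => (p : ℤ) ∣ Δ), p ∣ Δ.natAbs := by
      refine Finset.prod_primes_dvd _ ?_ ?_
      · intro p hp
        exact (hQ p (Finset.mem_filter.1 hp).1).1.prime
      · intro p hp
        exact Int.natCast_dvd.1 (Finset.mem_filter.1 hp).2
    have h2 := Nat.le_of_dvd (Int.natAbs_pos.2 hΔ) h1
    have h3 : P ^ (Q.filter (fun p : ℕ => (p : ℤ) ∣ Δ)).card ≤
        ∏ p ∈ Q.filter (fun p : ℕ => (p : ℤ) ∣ Δ), p :=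
      Finset.pow_card_le_prod _ _ _ fun p hp => (hQ p (Finset.mem_filter.1 hp).1).2.1
    have h4 := Nat.pow_le_pow_right hP hcon
    omega
  have hgood : k ≤ (Q.filter (fun p : ℕ => ¬ (p : ℤ) ∣ Δ)).card := by
    have := Finset.card_filter_add_card_filter_not (s := Q) (fun p : ℕ => (p : ℤ) ∣ Δ)
    omega
  obtain ⟨R, hR, hRc⟩ := Finset.exists_subset_card_eq hgood
  refine ⟨R.toList, by rw [Finset.length_toList, hRc], Finset.nodup_toList _, ?_⟩
  intro p hp
  have hp' := Finset.mem_filter.1 (hR (Finset.mem_toList.1 hp))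
  exact ⟨(hQ p hp'.1).1, hp'.2, (hQ p hp'.1).2⟩

lemma eval_polyOf {m d : ℕ} (c : Ex m d → ℤ) (x : Fin m → ℤ) :
    eval x (polyOf c) = ∑ e : Ex m d, (∏ i, x i ^ (e.1 i)) * c e := by
  unfold polyOf
  rw [map_sum]
  refine Finset.sum_congr rfl fun e _ => ?_
  rw [eval_monomial, mul_comm, Finsupp.prod_fintype _ _ (fun i => pow_zero _)]

lemma mono_bound {m d : ℕ} (e : Ex m d) (x : Fin m → ℤ) (H : ℕ)
    (hx : ∀ i, |x i| ≤ (H : ℤ)) : |∏ i, x i ^ (e.1 i)| ≤ ((H ^ d : ℕ) : ℤ) := by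
  have hd : ∑ i, e.1 i = d := (Finset.mem_finsuppAntidiag.1 e.2).1
  rw [Finset.abs_prod]
  calc ∏ i, |x i ^ e.1 i| ≤ ∏ i, (H : ℤ) ^ e.1 i := by
        refine Finset.prod_le_prod (fun i _ => abs_nonneg _) fun i _ => ?_
        rw [abs_pow]
        exact pow_le_pow_left₀ (abs_nonneg _) (hx i) _
    _ = (H : ℤ) ^ (∑ i, e.1 i) := Finset.prod_pow_eq_pow_sum _ _ _
    _ = _ := by rw [hd]; push_cast; rfl

lemma red_ne_zero {m : ℕ} (x : Fin m → ℤ) (hx : IsPrimitiveVec x) (p : ℕ) (hp : p.Prime) :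
    red p x ≠ 0 := by
  intro h
  have h1 : (p : ℤ) ∣ Finset.univ.gcd x := by
    refine Finset.dvd_gcd fun i _ => ?_
    have := congrFun h i
    exact (ZMod.intCast_zmod_eq_zero_iff_dvd _ _).1 this
  rw [show Finset.univ.gcd x = 1 from hx] at h1
  have := Int.natCast_dvd.1 h1
  simp at this
  exact hp.one_lt.ne' this

theorem nat_core (d n : ℕ) (hd : 2 ≤ d) (hn : 2 ≤ n) : ∃ K A : ℕ,
    ∀ F : MvPolynomial (Fin (n + 1)) ℤ, F.IsHomogeneous d → NonsingularZ F →
    ∀ H P k m : ℕ, 1 ≤ H → 1 ≤ P → K * H ^ A < P ^ m → H ≤ P ^ k →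
    ∀ S : Finset (Fin (n + 1) → ℤ),
      (∀ x ∈ S, IsPrimitiveVec x ∧ (∀ i, |x i| ≤ (H : ℤ)) ∧ eval x F = 0) →
      S.card ≤ c0 d n ^ k * ((2 ^ (k + m) * P) ^ k) ^ (n - 1) *
        (3 ^ (n + 1) + k * (2 ^ (k + m) * P) ^ 2) := by
  classical
  obtain ⟨T, hT1, hT2⟩ := cert n d
  choose Kf Af hKA using fun r : MvPolynomial (Ex (n + 1) d) ℤ => small_coeff r
  refine ⟨∑ r ∈ T, Kf r, d * ∑ r ∈ T, Af r, ?_⟩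
  intro F hF hns H P k m hH hP hKP hHP S hS
  set c : Ex (n + 1) d → ℤ := fun e => coeff e.1 F with hc
  have hFc : F = polyOf c := eq_polyOf hF
  obtain ⟨r, hrT, hr⟩ := hT2 c (hFc ▸ hns)
  let E : Finset (Ex (n + 1) d → ℤ) := S.image fun x e => ∏ i, x i ^ (e.1 i)
  have hE : ∀ a ∈ E, ∀ e, |a e| ≤ ((H ^ d : ℕ) : ℤ) := by
    intro a ha e
    obtain ⟨x, hx, rfl⟩ := Finset.mem_image.1 ha
    exact mono_bound e x H (hS x hx).2.1
  have hEc : ∀ a ∈ E, ∑ e, a e * c e = 0 := by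
    intro a ha
    obtain ⟨x, hx, rfl⟩ := Finset.mem_image.1 ha
    rw [← eval_polyOf, ← hFc]
    exact (hS x hx).2.2
  obtain ⟨c', h1, h2, h3⟩ := hKA r (H ^ d) (Nat.one_le_pow _ _ hH) E hE c hEc hr
  obtain ⟨D, hD⟩ := hT1 r hrT c'
  have hlt : (eval c' r).natAbs < P ^ m := by
    refine lt_of_le_of_lt ?_ hKP
    have h4 : (eval c' r).natAbs ≤ Kf r * (H ^ d) ^ Af r := by
      rw [Int.abs_eq_natAbs] at h3
      exact_mod_cast h3
    refine h4.trans ?_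
    rw [← pow_mul]
    refine Nat.mul_le_mul (Finset.single_le_sum (fun _ _ => Nat.zero_le _) hrT) ?_
    exact Nat.pow_le_pow_right hH
      (Nat.mul_le_mul_left _ (Finset.single_le_sum (fun _ _ => Nat.zero_le _) hrT))
  obtain ⟨ps, hlen, hnd, hps⟩ := primes_avail P hP _ h2 k m hlt
  have hF' : (polyOf c').IsHomogeneous d := polyOf_hom c'
  have hlo : P ^ k ≤ ps.prod := by
    rw [← hlen]
    exact List.pow_card_le_prod _ _ fun p hp => (hps p hp).2.2.1
  have hup : ps.prod ≤ (2 ^ (k + m) * P) ^ k := by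
    rw [← hlen]
    exact List.prod_le_pow_card _ _ fun p hp => by rw [hlen]; exact (hps p hp).2.2.2
  have key := recur_top (F := polyOf c') (by omega) hF' (2 ^ (k + m) * P) ps
    (fun p hp => by
      haveI : Fact p.Prime := ⟨(hps p hp).1⟩
      exact ⟨(hps p hp).1, good_field hn hd hF' (eval c' r) D hD (hps p hp).2.1, (hps p hp).2.2.2⟩)
    hnd S (fun x hx => by
      refine ⟨?_, fun p hp => red_ne_zero x (hS x hx).1 p (hps p hp).1, fun i => ?_⟩
      · rw [eval_polyOf]
        exact h1 _ (Finset.mem_image_of_mem _ hx)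
      · refine ((hS x hx).2.1 i).trans ?_
        exact_mod_cast hHP.trans hlo)
  refine key.trans ?_
  rw [hlen]
  gcongr

theorem final_bound (ε : ℝ) (hε : 0 < ε) (d n : ℕ) (hd : 2 ≤ d) (hn : 2 ≤ n) :
    ∃ C : ℝ, 0 < C ∧ ∀ F : MvPolynomial (Fin (n + 1)) ℤ,
      F.IsHomogeneous d → NonsingularZ F → ∀ B : ℝ, 1 ≤ B →
      (Set.ncard {x : Fin (n + 1) → ℤ | IsPrimitiveVec x ∧ heightVec x ≤ B ∧
          MvPolynomial.eval x F = 0} : ℝ) ≤ C * B ^ ((n : ℝ) - 1 + ε) := by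
  classical
  obtain ⟨K, A, hcore⟩ := nat_core d n hd hn
  obtain ⟨k, hk⟩ := exists_nat_gt (max 1 (2 / ε))
  have hk1 : (1 : ℝ) < k := (le_max_left _ _).trans_lt hk
  have hk0 : k ≠ 0 := by rintro rfl; norm_num at hk1
  have hkε : 2 / (k : ℝ) ≤ ε := by
    have h2 : 2 / ε < k := (le_max_right _ _).trans_lt hk
    rw [div_lt_iff₀ hε] at h2
    rw [div_le_iff₀ (by linarith)]
    linarith
  set m := k * A + 1 with hm
  set c : ℝ := 2 ^ (k + m) * (2 * (K + 1)) with hc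
  have hcpos : 0 < c := by positivity
  set C1 : ℝ := (c0 d n : ℝ) ^ k * (c ^ k) ^ (n - 1) * (3 ^ (n + 1) + k * c ^ 2) with hC1
  have hC1n : 0 ≤ C1 := by positivity
  refine ⟨C1 + 1, by linarith, ?_⟩
  intro F hF hns B hB
  have hB0 : 0 < B := by linarith
  set H := ⌊B⌋₊ with hH
  set b : ℝ := B ^ ((1 : ℝ) / k) with hb
  have hb1 : 1 ≤ b := Real.one_le_rpow hB (by positivity)
  have hbk : b ^ k = B := by
    rw [hb, ← Real.rpow_natCast, ← Real.rpow_mul hB0.le]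
    rw [one_div, inv_mul_cancel₀ (by exact_mod_cast hk0), Real.rpow_one]
  set P := (K + 1) * ⌈b⌉₊ with hP
  have hceil : b ≤ (⌈b⌉₊ : ℝ) := Nat.le_ceil b
  have hceil2 : (⌈b⌉₊ : ℝ) ≤ 2 * b := by
    have := Nat.ceil_lt_add_one (by linarith : (0:ℝ) ≤ b)
    linarith
  have hceil1 : 1 ≤ ⌈b⌉₊ := Nat.one_le_ceil_iff.2 (by linarith)
  have hHB : (H : ℝ) ≤ B := Nat.floor_le hB0.le
  have hHc : H ≤ ⌈b⌉₊ ^ k := by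
    have : (H : ℝ) ≤ (⌈b⌉₊ : ℝ) ^ k := by
      refine hHB.trans ?_
      rw [← hbk]
      gcongr
    exact_mod_cast this
  have hH1 : 1 ≤ H := Nat.le_floor (by exact_mod_cast hB)
  have hP1 : 1 ≤ P := Nat.mul_pos (by omega) hceil1
  have hHP : H ≤ P ^ k := hHc.trans (Nat.pow_le_pow_left (Nat.le_mul_of_pos_left _ (by omega)) _)
  have hKP : K * H ^ A < P ^ m := by
    calc K * H ^ A < (K + 1) * H ^ A := by
          have : 0 < H ^ A := by positivity
          nlinarith
      _ ≤ P * (P ^ k) ^ A := by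
          gcongr
          exact Nat.le_mul_of_pos_right _ hceil1
      _ = P ^ m := by rw [hm, ← pow_mul, pow_succ, mul_comm]
  have hset : ∀ x ∈ {x : Fin (n + 1) → ℤ | IsPrimitiveVec x ∧ heightVec x ≤ B ∧
          MvPolynomial.eval x F = 0}, ∀ i, |x i| ≤ (H : ℤ) := by
    rintro x ⟨_, hx, _⟩ i
    have h1 : (Finset.univ.sup fun i => (x i).natAbs) ≤ H := Nat.le_floor hx
    have h2 : (x i).natAbs ≤ H :=
      (Finset.le_sup (f := fun i => (x i).natAbs) (Finset.mem_univ i)).trans h1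
    rw [Int.abs_eq_natAbs]
    exact_mod_cast h2
  have hfin : {x : Fin (n + 1) → ℤ | IsPrimitiveVec x ∧ heightVec x ≤ B ∧
          MvPolynomial.eval x F = 0}.Finite := by
    refine Set.Finite.subset (Set.finite_Icc (fun _ => -(H : ℤ)) (fun _ => (H : ℤ))) ?_
    intro x hx
    exact ⟨fun i => (abs_le.1 (hset x hx i)).1, fun i => (abs_le.1 (hset x hx i)).2⟩
  have key := hcore F hF hns H P k m hH1 hP1 hKP hHP hfin.toFinset (fun x hx => by
    have hx' := hfin.mem_toFinset.1 hx
    exact ⟨hx'.1, hset x hx', hx'.2.2⟩)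
  rw [Set.ncard_eq_toFinset_card _ hfin]
  have key' : (hfin.toFinset.card : ℝ) ≤ (c0 d n : ℝ) ^ k * (((2 : ℝ) ^ (k + m) * P) ^ k) ^ (n - 1) *
        (3 ^ (n + 1) + k * ((2 : ℝ) ^ (k + m) * P) ^ 2) := by exact_mod_cast key
  have hQ : (2 : ℝ) ^ (k + m) * P ≤ c * b := by
    rw [hc, hP]
    push_cast
    calc (2 : ℝ) ^ (k + m) * ((K + 1) * ⌈b⌉₊) ≤ (2 : ℝ) ^ (k + m) * ((K + 1) * (2 * b)) := by gcongr
      _ = _ := by ring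
  have hbb : 1 ≤ b ^ 2 := one_le_pow₀ hb1
  have hfinal : (c0 d n : ℝ) ^ k * (((2 : ℝ) ^ (k + m) * P) ^ k) ^ (n - 1) *
        (3 ^ (n + 1) + k * ((2 : ℝ) ^ (k + m) * P) ^ 2) ≤ C1 * (B ^ (n - 1) * b ^ 2) := by
    calc _ ≤ (c0 d n : ℝ) ^ k * ((c * b) ^ k) ^ (n - 1) *
        (3 ^ (n + 1) * b ^ 2 + k * (c * b) ^ 2) := by
          gcongr
          exact le_mul_of_one_le_right (by positivity) hbb
      _ = _ := by
          rw [mul_pow c b k, hbk, mul_pow, hC1]; ring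
  have hexp : B ^ (n - 1) * b ^ 2 ≤ B ^ ((n : ℝ) - 1 + ε) := by
    rw [hb, ← Real.rpow_natCast, ← Real.rpow_natCast, ← Real.rpow_mul hB0.le,
      ← Real.rpow_add hB0]
    refine Real.rpow_le_rpow_of_exponent_le hB ?_
    rw [Nat.cast_sub (by omega)]
    have : (1 : ℝ) / k * ((2 : ℕ) : ℝ) = 2 / k := by push_cast; ring
    rw [this]; push_cast
    linarith
  calc (hfin.toFinset.card : ℝ) ≤ C1 * (B ^ (n - 1) * b ^ 2) := key'.trans hfinal
    _ ≤ C1 * B ^ ((n : ℝ) - 1 + ε) := by gcongr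
    _ ≤ (C1 + 1) * B ^ ((n : ℝ) - 1 + ε) := by
      have : 0 < B ^ ((n : ℝ) - 1 + ε) := by positivity
      nlinarith
end

/-- **Conjecture 1 (now a theorem).** For any integers d, n ≥ 2, ε > 0 and any
non-singular form F of degree d in n+1 variables, the number of rational points of
height at most B on the hypersurface X = {F = 0} satisfies
N_X(B) = O_{d,ε,n}(B^{n-1+ε}).  Rational points of height at most B are counted via
primitive integer solutions x of F(x) = 0 with max|x_i| ≤ B (each projective point
corresponds to exactly two such vectors). -/
theorem statement1 (ε : ℝ) (hε : 0 < ε) (d n : ℕ) (hd : 2 ≤ d)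
    (hn : 2 ≤ n) :
    ∃ C : ℝ, 0 < C ∧ ∀ F : MvPolynomial (Fin (n + 1)) ℤ,
      F.IsHomogeneous d → NonsingularZ F → ∀ B : ℝ, 1 ≤ B →
      (Set.ncard {x : Fin (n + 1) → ℤ | IsPrimitiveVec x ∧ heightVec x ≤ B ∧
          MvPolynomial.eval x F = 0} : ℝ) ≤ C * B ^ ((n : ℝ) - 1 + ε) := by
  exact final_bound ε hε d n hd hn

end
end

section
/- Let H ≥ 1 and let a, b, c ≥ 0 be real numbers. Then for all real numbers A, B, C satisfying 1 ≤ A ≤ B ≤ C and ABC ≤ H, one has A^a B^b C^c ≤ max{ H^{(a+b+c)/3}, H^{(b+c)/2}, H^c }. -/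
/-- **Lemma 1 (linear programming).** Let H ≥ 1 and a,b,c ≥ 0.  Then for all real
A,B,C with 1 ≤ A ≤ B ≤ C and ABC ≤ H one has
A^a B^b C^c ≤ max{H^{(a+b+c)/3}, H^{(b+c)/2}, H^c}. -/
theorem statement2 (H a b c A B C : ℝ) (hH : 1 ≤ H) (ha : 0 ≤ a) (hb : 0 ≤ b)
    (hc : 0 ≤ c) (h1A : 1 ≤ A) (hAB : A ≤ B) (hBC : B ≤ C) (hABC : A * B * C ≤ H) :
    A ^ a * B ^ b * C ^ c ≤
      max (H ^ ((a + b + c) / 3)) (max (H ^ ((b + c) / 2)) (H ^ c)) := by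
  have hA : 0 < A := by linarith
  have hB : 0 < B := by linarith
  have hC : 0 < C := by linarith
  have hH0 : 0 < H := by linarith
  have hx : 0 ≤ Real.log A := Real.log_nonneg h1A
  have hxy : Real.log A ≤ Real.log B := Real.log_le_log hA hAB
  have hyz : Real.log B ≤ Real.log C := Real.log_le_log hB hBC
  have hs : Real.log A + Real.log B + Real.log C ≤ Real.log H := by
    rw [← Real.log_mul hA.ne' hB.ne', ← Real.log_mul (mul_pos hA hB).ne' hC.ne']
    exact Real.log_le_log (by positivity) hABC
  have key : ∀ M : ℝ, (a + b + c) / 3 ≤ M → (b + c) / 2 ≤ M → c ≤ M →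
      A ^ a * B ^ b * C ^ c ≤ H ^ M := by
    intro M h1 h2 h3
    rw [Real.rpow_def_of_pos hA, Real.rpow_def_of_pos hB, Real.rpow_def_of_pos hC,
      Real.rpow_def_of_pos hH0, ← Real.exp_add, ← Real.exp_add]
    apply Real.exp_le_exp.mpr
    have e1 := mul_le_mul_of_nonneg_right h1 hx
    have e2 := mul_le_mul_of_nonneg_right h2 (sub_nonneg.mpr hxy)
    have e3 := mul_le_mul_of_nonneg_right h3 (sub_nonneg.mpr hyz)
    have e4 := mul_le_mul_of_nonneg_left hs (hc.trans h3)
    linarith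
  rcases le_total ((a + b + c) / 3) ((b + c) / 2) with h | h
  · rcases le_total ((b + c) / 2) c with h' | h'
    · exact (key c (h.trans h') h' le_rfl).trans ((le_max_right _ _).trans (le_max_right _ _))
    · exact (key _ h le_rfl h').trans ((le_max_left _ _).trans (le_max_right _ _))
  · rcases le_total ((a + b + c) / 3) c with h' | h'
    · exact (key c h' (h.trans h') le_rfl).trans ((le_max_right _ _).trans (le_max_right _ _))
    · exact (key _ le_rfl h h').trans (le_max_left _ _)
end

section
/- Let V ⊂ P^N be a projective variety of degree d and dimension m, defined over the algebraic closure of ℚ. Then N_V(B) = O_{d,N}(B^{m+1}), the implied constant depending only on d and N. -/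
noncomputable section

abbrev Pn (N : ℕ) := Projectivization KK (Fin (N + 1) → KK)

/-- The common zero set in projective space of a family of polynomials
(membership tested on the chosen representative). -/
def projZeros {N : ℕ} (S : Set (MvPolynomial (Fin (N + 1)) KK)) : Set (Pn N) :=
  {x | ∀ f ∈ S, MvPolynomial.eval x.rep f = 0}

/-- Zariski-closed subsets of projective space: common zero sets of families of forms. -/
def ProjClosed {N : ℕ} (V : Set (Pn N)) : Prop :=
  ∃ S : Set (MvPolynomial (Fin (N + 1)) KK),
    (∀ f ∈ S, ∃ d, f.IsHomogeneous d) ∧ V = projZeros S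

def ProjIrred {N : ℕ} (V : Set (Pn N)) : Prop :=
  V.Nonempty ∧ ∀ C₁ C₂ : Set (Pn N), ProjClosed C₁ → ProjClosed C₂ →
    V ⊆ C₁ ∪ C₂ → V ⊆ C₁ ∨ V ⊆ C₂

/-- A (geometrically integral) projective variety: an irreducible Zariski-closed set. -/
def ProjVariety {N : ℕ} (V : Set (Pn N)) : Prop := ProjClosed V ∧ ProjIrred V

/-- Dimension of a subset of projective space: Krull dimension of the poset of
irreducible closed subsets contained in it. The empty set has dimension `⊥`. -/
def projDim {N : ℕ} (V : Set (Pn N)) : WithBot ENat :=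
  Order.krullDim {W : Set (Pn N) // ProjVariety W ∧ W ⊆ V}

/-- The set of projective points lying on a linear subspace. -/
def planeSet {N : ℕ} (W : Submodule KK (Fin (N + 1) → KK)) : Set (Pn N) :=
  {x | x.rep ∈ W}

/-- Degree of a subset of projective space: the largest (finite) number of points
in a linear section. -/
def projDeg {N : ℕ} (V : Set (Pn N)) : ℕ :=
  sSup {k : ℕ | ∃ W : Submodule KK (Fin (N + 1) → KK),
    (V ∩ planeSet W).Finite ∧ (V ∩ planeSet W).ncard = k}

/-- The hypersurface cut out by a form. -/
def hyp {n : ℕ} (F : MvPolynomial (Fin (n + 1)) KK) : Set (Pn n) :=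
  {x | MvPolynomial.eval x.rep F = 0}

/-- A form over the algebraic closure is non-singular if its partial derivatives
have no common non-trivial zero. -/
def NonsingularK {n : ℕ} (F : MvPolynomial (Fin (n + 1)) KK) : Prop :=
  ∀ z : Fin (n + 1) → KK,
    (∀ i, MvPolynomial.eval z (MvPolynomial.pderiv i F) = 0) → z = 0

/-- The Fano set of (projective) m-planes contained in X, as linear subspaces of
dimension m+1. -/
def Fano (m n : ℕ) (X : Set (Pn n)) : Set (Submodule KK (Fin (n + 1) → KK)) :=
  {W | Module.finrank KK W = m + 1 ∧ planeSet W ⊆ X}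

/-- Closed subsets of the Grassmannian of m-planes in Pⁿ, described via Stiefel
coordinates: Z is closed iff the set of (m+1)-tuples of vectors which, when
linearly independent, span a member of Z, is Zariski-closed in affine space. -/
def GrClosed (m n : ℕ) (Z : Set (Submodule KK (Fin (n + 1) → KK))) : Prop :=
  (∀ W ∈ Z, Module.finrank KK W = m + 1) ∧
  ∃ S : Set (MvPolynomial (Fin (m + 1) × Fin (n + 1)) KK),
    {v : Fin (m + 1) → Fin (n + 1) → KK |
      LinearIndependent KK v → Submodule.span KK (Set.range v) ∈ Z}
    = {v | ∀ f ∈ S, MvPolynomial.eval (fun p => v p.1 p.2) f = 0}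

def GrIrred (m n : ℕ) (Z : Set (Submodule KK (Fin (n + 1) → KK))) : Prop :=
  Z.Nonempty ∧ ∀ C₁ C₂ : Set (Submodule KK (Fin (n + 1) → KK)),
    GrClosed m n C₁ → GrClosed m n C₂ → Z ⊆ C₁ ∪ C₂ → Z ⊆ C₁ ∨ Z ⊆ C₂

/-- A (geometrically integral) subvariety of the Grassmannian. -/
def GrVariety (m n : ℕ) (Z : Set (Submodule KK (Fin (n + 1) → KK))) : Prop :=
  GrClosed m n Z ∧ GrIrred m n Z

/-- Dimension of a subset of the Grassmannian of m-planes in Pⁿ. -/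
def grDim (m n : ℕ) (Z : Set (Submodule KK (Fin (n + 1) → KK))) : WithBot ENat :=
  Order.krullDim {W : Set (Submodule KK (Fin (n + 1) → KK)) // GrVariety m n W ∧ W ⊆ Z}

/-- D(Z): the union of the planes parametrised by Z. -/
def DSet {n : ℕ} (Z : Set (Submodule KK (Fin (n + 1) → KK))) : Set (Pn n) :=
  {x | ∃ Λ ∈ Z, x.rep ∈ Λ}

def coeK {n : ℕ} (x : Fin n → ℤ) : Fin n → KK := fun i => ((x i : ℤ) : KK)

def coeQ {n : ℕ} (x : Fin n → ℤ) : Fin n → ℚ := fun i => ((x i : ℤ) : ℚ)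

/-- The number of rational points of height at most B on a subset V of projective
space, counted via primitive integer vectors (each projective rational point
corresponds to exactly two primitive vectors). -/
def NV {n : ℕ} (V : Set (Pn n)) (B : ℝ) : ℕ :=
  Set.ncard {x : Fin (n + 1) → ℤ | IsPrimitiveVec x ∧ heightVec x ≤ B ∧
    ∃ h : coeK x ≠ 0, Projectivization.mk KK (coeK x) h ∈ V}

/-- Base change of an integer polynomial to the algebraic closure of ℚ. -/
def mapK {n : ℕ} (F : MvPolynomial (Fin (n + 1)) ℤ) : MvPolynomial (Fin (n + 1)) KK :=
  MvPolynomial.map (Int.castRingHom KK) F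

/-- The Plücker height of the rational m-plane spanned by the integer vectors v:
the maximum modulus of the (m+1)×(m+1) minors, divided by their gcd. -/
def pluckerHeight {m n : ℕ} (v : Fin (m + 1) → Fin (n + 1) → ℤ) : ℕ :=
  (Finset.univ.sup fun s : Fin (m + 1) → Fin (n + 1) =>
    (Matrix.det (Matrix.of fun i j => v i (s j))).natAbs) /
  (Finset.univ.gcd fun s : Fin (m + 1) → Fin (n + 1) =>
    (Matrix.det (Matrix.of fun i j => v i (s j))).natAbs)

def betaExp (k : ℕ) : ℝ := if k ≤ 3 then 0 else 1/4

def sigmaExp (n k : ℕ) : ℝ :=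
  if (k : ℝ) ≤ ((n : ℝ) - 1) / 2 then (k : ℝ) + 1 else (k : ℝ) + betaExp k

def tauExp (n k : ℕ) : ℝ :=
  if (k : ℝ) < ((n : ℝ) - 1) / 2 then (k : ℝ) + 1 else (k : ℝ) + betaExp k

/-- E: the union of the (n-1)/2-planes contained in X (for n odd; empty for n even). -/
def bigE {n : ℕ} (X : Set (Pn n)) : Set (Pn n) :=
  {x | n % 2 = 1 ∧ ∃ W : Submodule KK (Fin (n + 1) → KK),
    Module.finrank KK W = (n - 1) / 2 + 1 ∧ planeSet W ⊆ X ∧ x ∈ planeSet W}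

/-- The cone of lines contained in X passing through x. -/
def coneOfLines {n : ℕ} (X : Set (Pn n)) (x : Pn n) : Set (Pn n) :=
  {y | ∃ L : Submodule KK (Fin (n + 1) → KK),
    Module.finrank KK L = 2 ∧ planeSet L ⊆ X ∧ x.rep ∈ L ∧ y.rep ∈ L}

open MvPolynomial in
/-- The linear form attached to a row of a matrix. -/
noncomputable def linF {K : Type*} [Field K] {n : ℕ} (t : Fin n × Fin n → K) (l : Fin n) :
    MvPolynomial (Fin n) K := ∑ j, C (t (l, j)) * X j

open MvPolynomial in
lemma linF_hom {K : Type*} [Field K] {n : ℕ} (t : Fin n × Fin n → K) (l : Fin n) :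
    (linF t l).IsHomogeneous 1 := by
  apply IsHomogeneous.sum
  intro j _
  simpa using (isHomogeneous_C (Fin n) (t (l, j))).mul (isHomogeneous_X K j)

open MvPolynomial in
lemma linF_eval {K : Type*} [Field K] {n : ℕ} (t : Fin n × Fin n → K) (l : Fin n) (x : Fin n → K) :
    eval x (linF t l) = ∑ j, t (l, j) * x j := by
  simp [linF]

open MvPolynomial in
lemma null_lemma {K : Type*} [Field K] [IsAlgClosed K] {n : ℕ}
    (S : Set (MvPolynomial (Fin n) K)) (hS : ∀ f ∈ S, ∃ d, f.IsHomogeneous d)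
    (t : Fin n × Fin n → K)
    (h : ∀ x : Fin n → K, (∀ f ∈ S, eval x f = 0) → (∀ l, ∑ j, t (l, j) * x j = 0) → x = 0) :
    ∃ M : ℕ, ∀ s : Fin n →₀ ℕ, s.degree = M + 1 → ∃ (f : MvPolynomial (Fin n) K)
      (g : Fin n → MvPolynomial (Fin n) K), f ∈ Ideal.span S ∧ f.IsHomogeneous (M + 1) ∧
      (∀ l, (g l).IsHomogeneous M) ∧ monomial s 1 = f + ∑ l, linF t l * g l := by
  classical
  set J : Ideal (MvPolynomial (Fin n) K) := Ideal.span S ⊔ Ideal.span (Set.range (linF t)) with hJ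
  have hX : ∀ i, ∃ m, (X i : MvPolynomial (Fin n) K) ^ m ∈ J := by
    intro i
    have : (X i : MvPolynomial (Fin n) K) ∈ J.radical := by
      rw [← vanishingIdeal_zeroLocus_eq_radical (K := K), mem_vanishingIdeal_iff]
      intro x hx
      rw [hJ, ← Ideal.span_union, zeroLocus_span] at hx
      have : x = 0 := by
        apply h
        · intro f hf
          simpa [aeval_eq_eval] using hx f (Or.inl hf)
        · intro l
          have := hx (linF t l) (Or.inr ⟨l, rfl⟩)
          rw [aeval_eq_eval] at this; simpa only [linF_eval] using this
      simp [this]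
    exact this
  choose m hm using hX
  refine ⟨∑ i, m i, fun s hs => ?_⟩
  have hmem : monomial s (1 : K) ∈ J := by
    have : ∃ i, m i ≤ s i := by
      by_contra! hc
      have : s.degree ≤ ∑ i, m i := by
        rw [Finsupp.degree_eq_sum]
        exact Finset.sum_le_sum fun i _ => (hc i).le
      omega
    obtain ⟨i, hi⟩ := this
    have : monomial s (1 : K) = monomial (s - Finsupp.single i (m i)) 1 * X i ^ m i := by
      rw [X_pow_eq_monomial, monomial_mul, one_mul, tsub_add_cancel_of_le]
      simpa using hi
    rw [this]
    exact J.mul_mem_left _ (hm i)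
  obtain ⟨f, hf, r, hr, hfr⟩ := Submodule.mem_sup.1 hmem
  obtain ⟨g, hg⟩ := (Ideal.mem_span_range_iff_exists_fun).1 hr
  set M := ∑ i, m i
  let : GradedAlgebra (homogeneousSubmodule (Fin n) K) := MvPolynomial.gradedAlgebra
  have hhom : (Ideal.span S).IsHomogeneous (homogeneousSubmodule (Fin n) K) := by
    apply Ideal.homogeneous_span
    intro f hf
    obtain ⟨d, hd⟩ := hS f hf
    exact ⟨d, hd⟩
  let dc := DirectSum.decompose (homogeneousSubmodule (Fin n) K)
  refine ⟨dc f (M+1), fun l => dc (g l) M, hhom (M+1) hf, (dc f (M+1)).2,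
    fun l => (dc (g l) M).2, ?_⟩
  have h1 : (dc (monomial s (1:K)) (M+1) : MvPolynomial (Fin n) K) = monomial s 1 := by
    apply DirectSum.decompose_of_mem_same
    exact isHomogeneous_monomial _ hs
  rw [← h1, ← hfr, ← hg]
  simp only [dc, DirectSum.decompose_add, DirectSum.decompose_sum, DirectSum.add_apply, Submodule.coe_add]
  congr 1
  erw [DFinsupp.finsetSum_apply]
  rw [Submodule.coe_sum]
  apply Finset.sum_congr rfl
  intro l _
  rw [mul_comm, add_comm M 1]
  apply DirectSum.coe_decompose_mul_add_of_left_mem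
  exact linF_hom t l

open MvPolynomial in
lemma hom_eval {K : Type*} [Field K] {n M : ℕ} [Fintype {s : Fin n →₀ ℕ // s.degree = M}]
    (f : MvPolynomial (Fin n) K) (hf : f.IsHomogeneous M) (x : Fin n → K) :
    eval x f = ∑ s : {s : Fin n →₀ ℕ // s.degree = M}, coeff s.1 f * ∏ i, x i ^ (s.1 i) := by
  classical
  rw [eval_eq']
  symm
  have : f.support ⊆ Finset.univ.map (Function.Embedding.subtype
      (fun s : Fin n →₀ ℕ => s.degree = M)) := by
    intro s hs
    rw [mem_support_iff] at hs
    simp only [Finset.mem_map, Finset.mem_univ, true_and]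
    refine ⟨⟨s, ?_⟩, rfl⟩
    rw [Finsupp.degree_eq_weight_one]; exact hf hs
  rw [Finset.sum_subset this, Finset.sum_map]
  · rfl
  · intro s _ hs
    simp [notMem_support_iff.1 hs]

/-- The reduction condition: every monomial of degree `M + 1` is, on the zero set of `S`, a combination
of the linear forms with coefficients of degree at most `M`. -/
def RedCond {K : Type*} [Field K] {n : ℕ} (S : Set (MvPolynomial (Fin n) K)) (M : ℕ)
    (t : Fin n × Fin n → K) : Prop :=
  ∀ s : Fin n →₀ ℕ, s.degree = M + 1 → ∃ g : Fin n → MvPolynomial (Fin n) K,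
    (∀ l, g l ∈ MvPolynomial.restrictTotalDegree (Fin n) K M) ∧
    ∀ x : Fin n → K, (∀ f ∈ S, MvPolynomial.eval x f = 0) →
      ∏ i, x i ^ s i = ∑ l, (∑ j, t (l, j) * x j) * MvPolynomial.eval x (g l)

open MvPolynomial in
lemma open_lemma {K : Type*} [Field K] [IsAlgClosed K] {n : ℕ}
    (S : Set (MvPolynomial (Fin n) K)) (hS : ∀ f ∈ S, ∃ d, f.IsHomogeneous d)
    (t₀ : Fin n × Fin n → K)
    (h : ∀ x : Fin n → K, (∀ f ∈ S, eval x f = 0) → (∀ l, ∑ j, t₀ (l, j) * x j = 0) → x = 0) :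
    ∃ (M : ℕ) (F : MvPolynomial (Fin n × Fin n) K), eval t₀ F ≠ 0 ∧
      ∀ t, eval t F ≠ 0 → RedCond S M t := by
  classical
  obtain ⟨M, hM⟩ := null_lemma S hS t₀ h
  have hfin : Finite {s : Fin n →₀ ℕ // s.degree = M + 1} :=
    ((Finsupp.finite_of_degree_le (σ := Fin n) (M + 1)).subset (fun s hs => le_of_eq hs)).to_subtype
  let := Fintype.ofFinite {s : Fin n →₀ ℕ // s.degree = M + 1}
  choose f g hf hfh hgh hfg using fun s : {s : Fin n →₀ ℕ // s.degree = M + 1} => hM s.1 s.2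
  let A : Matrix {s : Fin n →₀ ℕ // s.degree = M + 1} {s : Fin n →₀ ℕ // s.degree = M + 1}
    (MvPolynomial (Fin n × Fin n) K) := fun s s' =>
      C (coeff s'.1 (f s)) + ∑ l, ∑ j, X (l, j) * C (coeff s'.1 (X j * g s l))
  have hA : ∀ t s s', eval t (A s s') = coeff s'.1 (f s + ∑ l, linF t l * g s l) := by
    intro t s s'
    simp only [A, linF, map_add, map_sum, map_mul, eval_C, eval_X, coeff_add, coeff_sum,
      Finset.sum_mul, mul_assoc, coeff_C_mul]
  refine ⟨M, A.det, ?_, ?_⟩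
  · rw [RingHom.map_det]
    have : (eval t₀).mapMatrix A = 1 := by
      ext s s'
      rw [RingHom.mapMatrix_apply, Matrix.map_apply, hA, ← hfg, coeff_monomial, Matrix.one_apply]
      simp only [Subtype.ext_iff]
    rw [this]; simp
  · intro t ht s hs
    rw [RingHom.map_det] at ht
    set B := (eval t).mapMatrix A with hB
    have hu : IsUnit B.det := isUnit_iff_ne_zero.2 ht
    refine ⟨fun l => ∑ s'', B⁻¹ ⟨s, hs⟩ s'' • g s'' l, ?_, ?_⟩
    · intro l
      refine Submodule.sum_mem _ fun s'' _ => Submodule.smul_mem _ _ ?_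
      rw [mem_restrictTotalDegree]
      exact (hgh s'' l).totalDegree_le
    · intro x hx
      have hfx : ∀ s, eval x (f s) = 0 := by
        intro s
        have : Ideal.span S ≤ RingHom.ker (eval x) := Ideal.span_le.2 fun p hp => hx p hp
        exact this (hf s)
      set xs : {s : Fin n →₀ ℕ // s.degree = M + 1} → K := fun s => ∏ i, x i ^ s.1 i
      have h1 : ∀ s, B.mulVec xs s = ∑ l, (∑ j, t (l, j) * x j) * eval x (g s l) := by
        intro s
        have hh : (f s + ∑ l, linF t l * g s l).IsHomogeneous (M + 1) := by
          refine (hfh s).add (IsHomogeneous.sum _ _ _ fun l _ => ?_)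
          rw [add_comm]
          exact (linF_hom t l).mul (hgh s l)
        have h2 := hom_eval _ hh x
        rw [map_add, hfx, zero_add, map_sum] at h2
        simp only [map_mul, linF_eval] at h2
        rw [h2]
        simp only [Matrix.mulVec, dotProduct, hB, RingHom.mapMatrix_apply, Matrix.map_apply, hA, xs]
      have h3 : xs = B⁻¹.mulVec (B.mulVec xs) := by
        rw [Matrix.mulVec_mulVec, Matrix.nonsing_inv_mul _ hu, Matrix.one_mulVec]
      have h4 := congrFun h3 ⟨s, hs⟩
      change xs ⟨s, hs⟩ = _
      rw [h4, Matrix.mulVec, dotProduct]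
      simp only [h1, map_sum, smul_eval, Finset.mul_sum]
      rw [Finset.sum_comm]
      refine Finset.sum_congr rfl fun l _ => Finset.sum_congr rfl fun s'' _ => ?_
      ring

open MvPolynomial in
lemma count_lemma {K : Type*} [Field K] {n : ℕ}
    (S : Set (MvPolynomial (Fin n) K)) (M : ℕ) (t : Fin n × Fin n → K) (hc : RedCond S M t)
    (c : Fin n → K) (A : Finset (Fin n → K))
    (hA : ∀ x ∈ A, (∀ f ∈ S, eval x f = 0) ∧ ∀ l, ∑ j, t (l, j) * x j = c l) :
    A.card ≤ (M + 1) ^ n := by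
  classical
  let V : Ideal (MvPolynomial (Fin n) K) := vanishingIdeal K (A : Set (Fin n → K))
  have hV : ∀ p, p ∈ V ↔ ∀ x ∈ A, eval x p = 0 := by
    intro p
    simp [V, mem_vanishingIdeal_iff, aeval_eq_eval]
  let Q : Submodule K (MvPolynomial (Fin n) K) :=
    restrictTotalDegree (Fin n) K M ⊔ V.restrictScalars K
  have hmon : ∀ s : Fin n →₀ ℕ, s.degree ≤ M + 1 → monomial s (1 : K) ∈ Q := by
    intro s hs
    rcases Nat.lt_or_ge s.degree (M + 1) with h | h
    · apply Submodule.mem_sup_left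
      rw [mem_restrictTotalDegree]
      refine (totalDegree_monomial_le _ _).trans ?_
      change s.degree ≤ M
      omega
    · obtain ⟨g, hg, hx⟩ := hc s (le_antisymm hs h)
      have : monomial s (1 : K) = ∑ l, c l • g l + (monomial s (1 : K) - ∑ l, c l • g l) := by ring
      rw [this]
      refine Submodule.add_mem_sup (Submodule.sum_mem _ fun l _ => Submodule.smul_mem _ _ (hg l)) ?_
      rw [Submodule.restrictScalars_mem, hV]
      intro x hxA
      rw [map_sub, eval_monomial, one_mul, Finsupp.prod_fintype _ _ (by simp),
        hx x (hA x hxA).1]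
      simp [(hA x hxA).2, smul_eval]
  have hmulX : ∀ p ∈ Q, ∀ i, p * X i ∈ Q := by
    intro p hp i
    obtain ⟨q, hq, v, hv, rfl⟩ := Submodule.mem_sup.1 hp
    rw [add_mul]
    refine Submodule.add_mem _ ?_ (Submodule.mem_sup_right (V.mul_mem_right _ hv))
    rw [mem_restrictTotalDegree] at hq
    rw [q.as_sum, Finset.sum_mul]
    refine Submodule.sum_mem _ fun s hs => ?_
    have : monomial s (coeff s q) * X i = coeff s q • monomial (s + Finsupp.single i 1) (1 : K) := by
      rw [smul_monomial, X, monomial_mul]; simp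
    rw [this]
    refine Submodule.smul_mem _ _ (hmon _ ?_)
    have := le_totalDegree hs
    rw [map_add, Finsupp.degree_single]
    have h2 : s.degree ≤ M := le_trans this hq
    omega
  have hQ : ∀ p, p ∈ Q := by
    intro p
    induction p using MvPolynomial.induction_on with
    | C a =>
      apply Submodule.mem_sup_left
      rw [mem_restrictTotalDegree]; simp
    | add p q hp hq => exact Submodule.add_mem _ hp hq
    | mul_X p i hp => exact hmulX p hp i
  have hli : LinearIndependent K
      (fun (x : A) (e : Fin n → Fin (M + 1)) => ∏ i, x.1 i ^ (e i : ℕ)) := by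
    rw [Fintype.linearIndependent_iff]
    intro a ha
    have hz : ∀ p : MvPolynomial (Fin n) K, ∑ x : A, a x * eval x.1 p = 0 := by
      let φ : MvPolynomial (Fin n) K →ₗ[K] K :=
        ∑ x : A, a x • (aeval x.1 : MvPolynomial (Fin n) K →ₐ[K] K).toLinearMap
      have hφ : ∀ p, φ p = ∑ x : A, a x * eval x.1 p := by
        intro p; simp [φ, aeval_eq_eval]
      have : Q ≤ LinearMap.ker φ := by
        apply sup_le
        · intro q hq
          rw [mem_restrictTotalDegree] at hq
          rw [LinearMap.mem_ker, q.as_sum, map_sum]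
          refine Finset.sum_eq_zero fun s hs => ?_
          have hs' : s.degree ≤ M := le_trans (le_totalDegree hs) hq
          have hsi : ∀ i, s i < M + 1 := fun i =>
            Nat.lt_succ_of_le ((Finsupp.le_degree i s).trans hs')
          have h3 := congrFun ha (fun i => ⟨s i, hsi i⟩)
          simp only [Finset.sum_apply, Pi.smul_apply, smul_eq_mul, Pi.zero_apply] at h3
          rw [hφ]
          have : ∀ x : A, a x * eval x.1 (monomial s (coeff s q)) =
              coeff s q * (a x * ∏ i, x.1 i ^ (s i)) := by
            intro x
            rw [eval_monomial, Finsupp.prod_fintype _ _ (by simp)]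
            ring
          simp only [this]
          rw [← Finset.mul_sum, h3, mul_zero]
        · intro v hv
          rw [Submodule.restrictScalars_mem, hV] at hv
          rw [LinearMap.mem_ker, hφ]
          exact Finset.sum_eq_zero fun x _ => by rw [hv x.1 x.2, mul_zero]
      intro p
      rw [← hφ]
      exact this (hQ p)
    have h5 := (linearIndependent_monoidHom (MvPolynomial (Fin n) K) K).comp
      (fun x : A => ((eval x.1 : MvPolynomial (Fin n) K →+* K) : MvPolynomial (Fin n) K →* K)) (by
        intro x y hxy
        ext i
        have := DFunLike.congr_fun hxy (X i)
        simpa using this)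
    rw [Fintype.linearIndependent_iff] at h5
    apply h5
    ext p
    simpa using hz p
  have := hli.fintype_card_le_finrank
  simpa using this

open MvPolynomial in
lemma uniform_lemma {K : Type*} [Field K] [IsAlgClosed K] {n : ℕ}
    (S : Set (MvPolynomial (Fin n) K)) (hS : ∀ f ∈ S, ∃ d, f.IsHomogeneous d) :
    ∃ b : ℕ, ∀ t : Fin n × Fin n → K,
      (∀ x : Fin n → K, (∀ f ∈ S, eval x f = 0) → (∀ l, ∑ j, t (l, j) * x j = 0) → x = 0) →
      ∀ (c : Fin n → K) (A : Finset (Fin n → K)),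
        (∀ x ∈ A, (∀ f ∈ S, eval x f = 0) ∧ ∀ l, ∑ j, t (l, j) * x j = c l) → A.card ≤ b := by
  classical
  let T : Set (MvPolynomial (Fin n × Fin n) K) :=
    {F | ∃ M, ∀ t, eval t F ≠ 0 → RedCond S M t}
  have hfg : (Ideal.span T).FG := IsNoetherian.noetherian _
  obtain ⟨T', hT', hsp⟩ := (Submodule.fg_span_iff_fg_span_finset_subset T).1 hfg
  have hch : ∀ F : T', ∃ M, ∀ t, eval t F.1 ≠ 0 → RedCond S M t := fun F => hT' F.2
  choose M hM using hch
  refine ⟨∑ F : T', (M F + 1) ^ n, fun t ht c A hA => ?_⟩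
  obtain ⟨M₀, F₀, hF₀, hF₀'⟩ := open_lemma S hS t ht
  have : ∃ F : T', eval t F.1 ≠ 0 := by
    by_contra! hcon
    have h1 : Ideal.span (T' : Set (MvPolynomial (Fin n × Fin n) K)) ≤ RingHom.ker (eval t) :=
      Ideal.span_le.2 fun p hp => hcon ⟨p, hp⟩
    have h2 : F₀ ∈ Ideal.span T := Ideal.subset_span ⟨M₀, hF₀'⟩
    have h3 : F₀ ∈ Ideal.span (T' : Set (MvPolynomial (Fin n × Fin n) K)) := by
      have : Ideal.span T = Ideal.span (T' : Set (MvPolynomial (Fin n × Fin n) K)) := hsp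
      rwa [this] at h2
    exact hF₀ (h1 h3)
  obtain ⟨F, hF⟩ := this
  refine (count_lemma S (M F) t (hM F t hF) c A hA).trans ?_
  exact Finset.single_le_sum (f := fun F : T' => (M F + 1) ^ n) (fun _ _ => Nat.zero_le _) (Finset.mem_univ F)

lemma finite_of_finset_bound {α : Type*} (s : Set α) (b : ℕ)
    (h : ∀ F : Finset α, (F : Set α) ⊆ s → F.card ≤ b) : s.Finite ∧ s.ncard ≤ b := by
  classical
  have hf : s.Finite := by
    by_contra hinf
    obtain ⟨F, hF, hc⟩ := Set.Infinite.exists_subset_card_eq hinf (b + 1)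
    have := h F hF
    omega
  refine ⟨hf, ?_⟩
  rw [Set.ncard_eq_toFinset_card s hf]
  exact h _ (by simp)

open MvPolynomial in
lemma hom_eval_smul {K : Type*} [Field K] {n d : ℕ} {f : MvPolynomial (Fin n) K}
    (hf : f.IsHomogeneous d) (a : K) (x : Fin n → K) : eval (a • x) f = a ^ d * eval x f := by
  rw [eval_eq', eval_eq', Finset.mul_sum]
  refine Finset.sum_congr rfl fun s hs => ?_
  have : s.degree = d := by
    rw [Finsupp.degree_eq_weight_one]; exact hf (mem_support_iff.1 hs)
  simp only [Pi.smul_apply, smul_eq_mul, mul_pow]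
  rw [Finset.prod_mul_distrib, Finset.prod_pow_eq_pow_sum, ← Finsupp.degree_eq_sum, this]
  ring

lemma exists_forms {K : Type*} [Field K] {n : ℕ} (H : Submodule K (Fin n → K)) :
    ∃ t : Fin n × Fin n → K, ∀ x, x ∈ H ↔ ∀ l, ∑ j, t (l, j) * x j = 0 := by
  obtain ⟨g, hg⟩ := LinearMap.exists_rightInverse_of_surjective H.mkQ
    (LinearMap.range_eq_top.2 H.mkQ_surjective)
  let T := g ∘ₗ H.mkQ
  refine ⟨fun p => LinearMap.toMatrix' T p.1 p.2, fun x => ?_⟩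
  have h1 : x ∈ H ↔ T x = 0 := by
    constructor
    · intro hx
      simp [T, (Submodule.Quotient.mk_eq_zero H).2 hx]
    · intro hx
      have : H.mkQ (T x) = H.mkQ x := LinearMap.congr_fun hg (H.mkQ x)
      rw [hx, map_zero] at this
      exact (Submodule.Quotient.mk_eq_zero H).1 this.symm
  rw [h1, ← LinearMap.toMatrix'_mulVec T x, funext_iff]
  rfl

/-- The projective set `V` misses the linear subspace `H`. -/
def Misses {N : ℕ} (V : Set (Pn N)) (H : Submodule KK (Fin (N + 1) → KK)) : Prop :=
  ∀ x ∈ V, x.rep ∉ H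

open MvPolynomial in
lemma section_lemma {N : ℕ} (V : Set (Pn N)) (hV : ProjClosed V) :
    ∃ b : ℕ, ∀ (H : Submodule KK (Fin (N + 1) → KK)) (v : Fin (N + 1) → KK), Misses V H →
      (V ∩ planeSet (H ⊔ Submodule.span KK {v})).Finite ∧
      (V ∩ planeSet (H ⊔ Submodule.span KK {v})).ncard ≤ b := by
  classical
  obtain ⟨S, hS, rfl⟩ := hV
  obtain ⟨b, hb⟩ := uniform_lemma S hS
  refine ⟨b, fun H v hm => ?_⟩
  obtain ⟨t, ht⟩ := exists_forms H
  apply finite_of_finset_bound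
  intro F hF
  have hrep : ∀ x : F, ∃ a : KK, a ≠ 0 ∧ ∃ h ∈ H, x.1.rep = h + a • v := by
    intro x
    obtain ⟨hxV, hxU⟩ := hF x.2
    obtain ⟨h, hh, y, hy, hxy⟩ := Submodule.mem_sup.1 (show x.1.rep ∈ _ from hxU)
    obtain ⟨a, rfl⟩ := Submodule.mem_span_singleton.1 hy
    refine ⟨a, ?_, h, hh, hxy.symm⟩
    rintro rfl
    apply hm x.1 hxV
    rw [← hxy]; simpa using hh
  choose a ha h hh hrep using hrep
  have hinj : Function.Injective (fun x : F => (a x)⁻¹ • x.1.rep) := by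
    intro x y hxy
    apply Subtype.ext
    rw [← x.1.mk_rep, ← y.1.mk_rep, Projectivization.mk_eq_mk_iff']
    refine ⟨a x * (a y)⁻¹, ?_⟩
    have hxy : (a x)⁻¹ • x.1.rep = (a y)⁻¹ • y.1.rep := hxy
    rw [mul_smul, ← hxy, smul_smul, mul_inv_cancel₀ (ha x), one_smul]
  have := hb t ?_ (fun l => ∑ j, t (l, j) * v j) (Finset.univ.image (fun x : F => (a x)⁻¹ • x.1.rep)) ?_
  · rwa [Finset.card_image_of_injective _ hinj, Finset.card_univ, Fintype.card_coe] at this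
  · intro x hx hxl
    by_contra hx0
    obtain ⟨c, hc⟩ := Projectivization.exists_smul_eq_mk_rep KK x hx0
    have hc' : (c : KK) • x = (Projectivization.mk KK x hx0).rep := hc
    apply hm (Projectivization.mk KK x hx0)
    · intro f hf
      obtain ⟨d, hd⟩ := hS f hf
      rw [← hc', hom_eval_smul hd, hx f hf, mul_zero]
    · rw [← hc']
      exact H.smul_mem _ ((ht x).2 hxl)
  · intro y hy
    obtain ⟨x, -, rfl⟩ := Finset.mem_image.1 hy
    constructor
    · intro f hf
      obtain ⟨d, hd⟩ := hS f hf
      rw [hom_eval_smul hd, (hF x.2).1 f hf, mul_zero]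
    · intro l
      have h1 : (a x)⁻¹ • x.1.rep = (a x)⁻¹ • h x + v := by
        rw [hrep x, smul_add, smul_smul, inv_mul_cancel₀ (ha x), one_smul]
      have h2 := (ht _).1 (H.smul_mem (a x)⁻¹ (hh x)) l
      rw [h1]
      simp only [Pi.add_apply, mul_add, Finset.sum_add_distrib] at h2 ⊢
      rw [h2, zero_add]

lemma deg_bdd {N : ℕ} (V : Set (Pn N)) (hV : ProjClosed V) :
    BddAbove {k : ℕ | ∃ W : Submodule KK (Fin (N + 1) → KK),
      (V ∩ planeSet W).Finite ∧ (V ∩ planeSet W).ncard = k} := by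
  obtain ⟨b, hb⟩ := section_lemma V hV
  refine ⟨b, ?_⟩
  rintro k ⟨W, hfin, rfl⟩
  have hφ : ∃ φ : Module.Dual KK (Fin (N + 1) → KK), ∀ x ∈ V ∩ planeSet W, φ x.rep ≠ 0 := by
    by_contra! hcon
    have := hfin.to_subtype
    obtain ⟨x, hx⟩ := Subspace.exists_eq_top_of_iUnion_eq_univ
      (p := fun x : ↥(V ∩ planeSet W) =>
        LinearMap.ker (Module.Dual.eval KK (Fin (N + 1) → KK) x.1.rep)) (by
        rw [Set.eq_univ_iff_forall]
        intro φ
        obtain ⟨x, hx, h0⟩ := hcon φ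
        exact Set.mem_iUnion.2 ⟨⟨x, hx⟩, h0⟩)
    apply x.1.rep_nonzero
    rw [LinearMap.ker_eq_top] at hx
    exact (Module.forall_dual_apply_eq_zero_iff KK _).1 fun φ => LinearMap.congr_fun hx φ
  obtain ⟨φ, hφ⟩ := hφ
  have hm : Misses V (W ⊓ LinearMap.ker φ) := fun x hx hxW => hφ x ⟨hx, hxW.1⟩ hxW.2
  have hv : ∃ v, W ≤ (W ⊓ LinearMap.ker φ) ⊔ Submodule.span KK {v} := by
    by_cases h : ∃ v ∈ W, φ v ≠ 0
    · obtain ⟨v, hvW, hv⟩ := h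
      refine ⟨v, fun w hw => ?_⟩
      have : w = (w - (φ w / φ v) • v) + (φ w / φ v) • v := by simp
      rw [this]
      refine Submodule.add_mem_sup ⟨W.sub_mem hw (W.smul_mem _ hvW), ?_⟩
        (Submodule.smul_mem _ _ (Submodule.mem_span_singleton_self v))
      simp [hv]
    · push Not at h
      exact ⟨0, fun w hw => Submodule.mem_sup_left ⟨hw, h w hw⟩⟩
  obtain ⟨v, hv⟩ := hv
  refine (Set.ncard_le_ncard ?_ (hb _ v hm).1).trans (hb _ v hm).2
  exact fun x hx => ⟨hx.1, hv hx.2⟩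

lemma deg_section {N : ℕ} (V : Set (Pn N)) (hV : ProjClosed V)
    (H : Submodule KK (Fin (N + 1) → KK)) (v : Fin (N + 1) → KK) (hm : Misses V H) :
    (V ∩ planeSet (H ⊔ Submodule.span KK {v})).Finite ∧
      (V ∩ planeSet (H ⊔ Submodule.span KK {v})).ncard ≤ projDeg V := by
  obtain ⟨b, hb⟩ := section_lemma V hV
  exact ⟨(hb H v hm).1, le_csSup (deg_bdd V hV) ⟨_, (hb H v hm).1, rfl⟩⟩

/-- The point `p` lies in `W` or the join of `W` and `p` meets `V`. -/
def Bad {N : ℕ} (V : Set (Pn N)) (W : Submodule KK (Fin (N + 1) → KK))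
    (p : Fin (N + 1) → KK) : Prop :=
  p ∈ W ∨ ∃ x ∈ V, x.rep ∈ W ⊔ Submodule.span KK {p}

lemma line_lemma {N : ℕ} (V : Set (Pn N)) (W : Submodule KK (Fin (N + 1) → KK)) (b : ℕ)
    (hb : ∀ (H : Submodule KK (Fin (N + 1) → KK)) (v : Fin (N + 1) → KK), Misses V H →
      (V ∩ planeSet (H ⊔ Submodule.span KK {v})).Finite ∧
      (V ∩ planeSet (H ⊔ Submodule.span KK {v})).ncard ≤ b)
    (hW : Misses V W) (p v : Fin (N + 1) → KK) (T : Finset KK) (hT1 : 1 < T.card)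
    (hTb : b < T.card) (hbad : ∀ t ∈ T, Bad V W (p + t • v)) (t₀ : KK) : Bad V W (p + t₀ • v) := by
  classical
  by_contra hq
  set q := p + t₀ • v with hqdef
  have hqW : q ∉ W := fun h => hq (Or.inl h)
  have hqm : Misses V (W ⊔ Submodule.span KK {q}) := fun x hx h => hq (Or.inr ⟨x, hx, h⟩)
  have hpt : ∀ t : KK, p + t • v = q + (t - t₀) • v := by
    intro t; rw [hqdef, sub_smul]; abel
  have hqmem : q ∈ W ⊔ Submodule.span KK {q} :=
    Submodule.mem_sup_right (Submodule.mem_span_singleton_self q)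
  by_cases hv : v ∈ W ⊔ Submodule.span KK {q}
  · obtain ⟨w, hw, y, hy, hwy⟩ := Submodule.mem_sup.1 hv
    obtain ⟨c, rfl⟩ := Submodule.mem_span_singleton.1 hy
    have hc : ∀ t ∈ T, 1 + (t - t₀) * c = 0 := by
      intro t ht
      have hin : p + t • v ∈ W := by
        rcases hbad t ht with h | ⟨x, hx, h⟩
        · exact h
        · exfalso
          refine hqm x hx ((sup_le le_sup_left ?_ : W ⊔ Submodule.span KK {p + t • v} ≤ _) h)
          rw [Submodule.span_singleton_le_iff_mem, hpt]
          exact Submodule.add_mem _ hqmem (Submodule.smul_mem _ _ hv)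
      by_contra hne
      apply hqW
      have : (1 + (t - t₀) * c) • q ∈ W := by
        have h1 : (1 + (t - t₀) * c) • q = (p + t • v) - (t - t₀) • w := by
          rw [hpt, ← hwy]; module
        rw [h1]
        exact W.sub_mem hin (W.smul_mem _ hw)
      exact (W.smul_mem_iff hne).1 this
    obtain ⟨t, ht, s, hs, hts⟩ := Finset.one_lt_card.1 hT1
    have h1 := hc t ht
    have h2 := hc s hs
    have h3 : (t - s) * c = 0 := by linear_combination h1 - h2
    rcases mul_eq_zero.1 h3 with h | h
    · exact hts (sub_eq_zero.1 h)
    · rw [h] at h1; simp at h1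
  · have hex : ∀ t : T, ∃ x ∈ V, x.rep ∈ W ⊔ Submodule.span KK {p + t.1 • v} := by
      intro t
      rcases hbad t t.2 with h | h
      · exfalso
        rw [hpt] at h
        by_cases htt : t.1 - t₀ = 0
        · rw [htt] at h; simp at h; exact hqW h
        · apply hv
          refine ((W ⊔ Submodule.span KK {q}).smul_mem_iff htt).1 ?_
          have : (t.1 - t₀) • v = (q + (t.1 - t₀) • v) - q := by abel
          rw [this]
          exact Submodule.sub_mem _ (Submodule.mem_sup_left h) hqmem
      · exact h
    choose x hxV hx using hex
    have hdec : ∀ t : T, ∃ w ∈ W, ∃ a : KK, a ≠ 0 ∧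
        (x t).rep = w + a • (q + (t.1 - t₀) • v) := by
      intro t
      obtain ⟨w, hw, y, hy, hwy⟩ := Submodule.mem_sup.1 (hx t)
      obtain ⟨a, rfl⟩ := Submodule.mem_span_singleton.1 hy
      refine ⟨w, hw, a, ?_, ?_⟩
      · rintro rfl
        apply hW _ (hxV t)
        rw [← hwy]; simpa using hw
      · rw [← hpt]; exact hwy.symm
    choose w hw a ha hrep using hdec
    have hinj : Function.Injective x := by
      intro t s hts
      have h1 : w t + a t • (q + (t.1 - t₀) • v) = w s + a s • (q + (s.1 - t₀) • v) := by
        rw [← hrep, ← hrep, hts]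
      have h2 : (a t * (t.1 - t₀) - a s * (s.1 - t₀)) • v = (w s - w t) + (a s - a t) • q := by
        rw [sub_smul, mul_smul, mul_smul]
        rw [smul_add, smul_add] at h1
        have h1' := sub_eq_zero.2 h1
        rw [← sub_eq_zero, ← h1']
        module
      have h3 : a t * (t.1 - t₀) - a s * (s.1 - t₀) = 0 := by
        by_contra hne
        apply hv
        refine ((W ⊔ Submodule.span KK {q}).smul_mem_iff hne).1 ?_
        rw [h2]
        exact Submodule.add_mem_sup (W.sub_mem (hw s) (hw t))
          (Submodule.smul_mem _ _ (Submodule.mem_span_singleton_self q))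
      have h4 : a s - a t = 0 := by
        by_contra hne
        apply hqW
        refine (W.smul_mem_iff hne).1 ?_
        rw [h3, zero_smul] at h2
        have : (a s - a t) • q = w t - w s := by
          rw [← sub_eq_zero, h2]; abel
        rw [this]
        exact W.sub_mem (hw t) (hw s)
      have h5 : a t * (t.1 - s.1) = 0 := by linear_combination h3 + (s.1 - t₀) * h4
      rcases mul_eq_zero.1 h5 with h | h
      · exact absurd h (ha t)
      · exact Subtype.ext (sub_eq_zero.1 h)
    obtain ⟨hfin, hcard⟩ := hb _ v hqm
    have hle : (Finset.univ.image x).card ≤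
        (V ∩ planeSet (W ⊔ Submodule.span KK {q} ⊔ Submodule.span KK {v})).ncard := by
      rw [← Set.ncard_coe_finset]
      refine Set.ncard_le_ncard ?_ hfin
      intro y hy
      obtain ⟨t, -, rfl⟩ := Finset.mem_image.1 (Finset.mem_coe.1 hy)
      refine ⟨hxV t, ?_⟩
      change (x t).rep ∈ W ⊔ Submodule.span KK {q} ⊔ Submodule.span KK {v}
      rw [hrep t]
      refine Submodule.add_mem _ (Submodule.mem_sup_left (Submodule.mem_sup_left (hw t))) ?_
      refine Submodule.smul_mem _ _ (Submodule.add_mem_sup hqmem ?_)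
      exact Submodule.smul_mem _ _ (Submodule.mem_span_singleton_self v)
    rw [Finset.card_image_of_injective _ hinj, Finset.card_univ, Fintype.card_coe] at hle
    omega

lemma grid_lemma {K : Type*} [Field K] {n : ℕ} (P : (Fin n → K) → Prop) (G : Finset K)
    (hline : ∀ p v, (∀ t ∈ G, P (p + t • v)) → ∀ t : K, P (p + t • v))
    (hgrid : ∀ p, (∀ i, p i ∈ G) → P p) (p : Fin n → K) : P p := by
  classical
  have key : ∀ s : Finset (Fin n), ∀ p, (∀ i ∉ s, p i ∈ G) → P p := by
    intro s
    induction s using Finset.induction_on with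
    | empty => intro p hp; exact hgrid p fun i => hp i (Finset.notMem_empty i)
    | insert a s has ih =>
      intro p hp
      have hupd : ∀ t : K, Function.update p a 0 + t • Pi.single a 1 = Function.update p a t := by
        intro t
        ext i
        by_cases h : i = a
        · subst h; simp
        · simp [h]
      have := hline (Function.update p a 0) (Pi.single a 1) (fun t ht => by
        rw [hupd]
        apply ih
        intro i hi
        by_cases h : i = a
        · subst h; simpa using ht
        · rw [Function.update_of_ne h]
          exact hp i (by simp [h, hi])) (p a)
      rwa [hupd, Function.update_eq_self] at this
  exact key Finset.univ p (by simp)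

lemma planeSet_closed {N : ℕ} (W : Submodule KK (Fin (N + 1) → KK)) : ProjClosed (planeSet W) := by
  obtain ⟨t, ht⟩ := exists_forms W
  refine ⟨Set.range (linF t), ?_, ?_⟩
  · rintro f ⟨l, rfl⟩
    exact ⟨1, linF_hom t l⟩
  · ext x
    simp [planeSet, projZeros, ht, linF_eval]

lemma closed_inter {N : ℕ} {V₁ V₂ : Set (Pn N)} (h₁ : ProjClosed V₁) (h₂ : ProjClosed V₂) :
    ProjClosed (V₁ ∩ V₂) := by
  obtain ⟨S₁, hS₁, rfl⟩ := h₁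
  obtain ⟨S₂, hS₂, rfl⟩ := h₂
  refine ⟨S₁ ∪ S₂, ?_, ?_⟩
  · rintro f (hf | hf)
    · exact hS₁ f hf
    · exact hS₂ f hf
  · ext x
    simp only [projZeros, Set.mem_inter_iff, Set.mem_ofPred_eq, Set.mem_union]
    constructor
    · rintro ⟨h1, h2⟩ f (hf | hf)
      · exact h1 f hf
      · exact h2 f hf
    · intro h
      exact ⟨fun f hf => h f (Or.inl hf), fun f hf => h f (Or.inr hf)⟩

open MvPolynomial in
lemma exists_minimal_closed {N : ℕ} (P : Set (Pn N) → Prop) (V : Set (Pn N)) (hV : ProjClosed V)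
    (hP : P V) : ∃ V₁ ⊆ V, ProjClosed V₁ ∧ P V₁ ∧
      ∀ V₂ ⊆ V₁, ProjClosed V₂ → P V₂ → V₂ = V₁ := by
  let I : Set (Pn N) → Ideal (MvPolynomial (Fin (N + 1)) KK) := fun V =>
    ⨅ x ∈ V, RingHom.ker (eval x.rep)
  have hI : ∀ V f, f ∈ I V ↔ ∀ x ∈ V, eval x.rep f = 0 := by
    intro V f
    simp [I, Submodule.mem_iInf, RingHom.mem_ker]
  obtain ⟨J, ⟨V₁, ⟨h1, h2, h3⟩, rfl⟩, hmax⟩ := (wellFounded_gt (α := Ideal (MvPolynomial (Fin (N + 1)) KK))).has_min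
    (Set.image I {Y | Y ⊆ V ∧ ProjClosed Y ∧ P Y}) ⟨_, V, ⟨subset_rfl, hV, hP⟩, rfl⟩
  refine ⟨V₁, h1, h2, h3, fun V₂ h21 hc hP2 => ?_⟩
  have hle : I V₁ ≤ I V₂ := by
    intro f hf
    rw [hI] at hf ⊢
    exact fun x hx => hf x (h21 hx)
  have heq : I V₂ ≤ I V₁ := by
    by_contra hcon
    exact hmax (I V₂) ⟨V₂, ⟨h21.trans h1, hc, hP2⟩, rfl⟩ (lt_of_le_not_ge hle hcon)
  refine Set.Subset.antisymm h21 fun x hx => ?_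
  obtain ⟨S, hS, rfl⟩ := hc
  intro f hf
  have : f ∈ I (projZeros S) := (hI _ _).2 fun y hy => hy f hf
  exact (hI _ _).1 (heq this) x hx

lemma split_lemma {N : ℕ} (V₁ V₂ : Set (Pn N)) (h₁ : ProjClosed V₁) (h₂ : ProjClosed V₂)
    (W U : Submodule KK (Fin (N + 1) → KK)) (hm₁ : Misses V₁ W) (hm₂ : Misses V₂ W)
    (h : ∀ p ∈ U, Bad V₁ W p ∨ Bad V₂ W p) :
    (∀ p ∈ U, Bad V₁ W p) ∨ (∀ p ∈ U, Bad V₂ W p) := by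
  by_contra! hcon
  obtain ⟨⟨p₁, hp₁, hn₁⟩, ⟨p₂, hp₂, hn₂⟩⟩ := hcon
  have key : ∀ V : Set (Pn N), ProjClosed V → Misses V W →
      (∃ t : KK, ¬ Bad V W (p₁ + t • (p₂ - p₁))) → {t : KK | Bad V W (p₁ + t • (p₂ - p₁))}.Finite := by
    intro V hV hm ⟨t, ht⟩
    obtain ⟨b, hb⟩ := section_lemma V hV
    refine (finite_of_finset_bound _ (b + 1) fun F hF => ?_).1
    by_contra! hlt
    exact ht (line_lemma V W b hb hm p₁ (p₂ - p₁) F (by omega) (by omega) (fun t ht => hF ht) t)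
  have f₁ := key V₁ h₁ hm₁ ⟨0, by simpa using hn₁⟩
  have f₂ := key V₂ h₂ hm₂ ⟨1, by simpa using hn₂⟩
  refine (Set.infinite_univ (α := KK)) ((f₁.union f₂).subset fun t _ => ?_)
  exact h _ (U.add_mem hp₁ (U.smul_mem _ (U.sub_mem hp₂ hp₁)))

lemma exists_subspace_between {K E : Type*} [Field K] [AddCommGroup E] [Module K E] [FiniteDimensional K E]
    (W U : Submodule K E) (hWU : W ≤ U) (k : ℕ) (hk : Module.finrank K W + k ≤ Module.finrank K U) :
    ∃ U', W ≤ U' ∧ U' ≤ U ∧ Module.finrank K U' = Module.finrank K W + k := by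
  induction k with
  | zero => exact ⟨W, le_rfl, hWU, rfl⟩
  | succ k ih =>
    obtain ⟨U', h1, h2, h3⟩ := ih (by omega)
    have : ∃ p ∈ U, p ∉ U' := by
      by_contra! hcon
      have := Submodule.finrank_mono (show U ≤ U' from hcon)
      omega
    obtain ⟨p, hp, hpU⟩ := this
    refine ⟨U' ⊔ Submodule.span K {p}, h1.trans le_sup_left,
      sup_le h2 ((Submodule.span_singleton_le_iff_mem _ _).2 hp), ?_⟩
    rw [Submodule.finrank_sup_span_singleton hpU, h3, add_assoc]

lemma exists_irred {N : ℕ} (V : Set (Pn N)) (W U : Submodule KK (Fin (N + 1) → KK))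
    (hV : ProjClosed V) (hm : Misses V W) (hUW : ¬ U ≤ W) (hfull : ∀ p ∈ U, Bad V W p) :
    ∃ V₁ ⊆ V, ProjVariety V₁ ∧ ∀ p ∈ U, Bad V₁ W p := by
  obtain ⟨V₁, hsub, hc, hf, hmin⟩ := exists_minimal_closed (fun V => ∀ p ∈ U, Bad V W p) V hV hfull
  refine ⟨V₁, hsub, ⟨hc, ?_, ?_⟩, hf⟩
  · obtain ⟨p, hp, hpW⟩ := Set.not_subset.1 hUW
    rcases hf p hp with h | ⟨x, hx, -⟩
    · exact absurd h hpW
    · exact ⟨x, hx⟩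
  · intro C₁ C₂ h₁ h₂ hsubC
    rcases split_lemma (V₁ ∩ C₁) (V₁ ∩ C₂) (closed_inter hc h₁) (closed_inter hc h₂) W U
      (fun x hx => hm x (hsub hx.1)) (fun x hx => hm x (hsub hx.1)) (by
        intro p hp
        rcases hf p hp with h | ⟨x, hx, h⟩
        · exact Or.inl (Or.inl h)
        · rcases hsubC hx with h' | h'
          · exact Or.inl (Or.inr ⟨x, ⟨hx, h'⟩, h⟩)
          · exact Or.inr (Or.inr ⟨x, ⟨hx, h'⟩, h⟩)) with h | h
    · left
      exact Set.inter_eq_left.1 (hmin _ Set.inter_subset_left (closed_inter hc h₁) h)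
    · right
      exact Set.inter_eq_left.1 (hmin _ Set.inter_subset_left (closed_inter hc h₂) h)

lemma chain_lemma {N : ℕ} (r : ℕ) : ∀ (V : Set (Pn N)) (W U : Submodule KK (Fin (N + 1) → KK)),
    ProjClosed V → Misses V W → W ≤ U → Module.finrank KK W + r + 1 ≤ Module.finrank KK U →
    (∀ p ∈ U, Bad V W p) →
    ∃ l : LTSeries {W : Set (Pn N) // ProjVariety W ∧ W ⊆ V}, l.length = r := by
  induction r with
  | zero =>
    intro V W U hV hm hWU hr hfull
    obtain ⟨V₁, hsub, hvar, hf⟩ := exists_irred V W U hV hm (fun h => by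
      have := Submodule.finrank_mono h
      omega) hfull
    exact ⟨RelSeries.singleton _ ⟨V₁, hvar, hsub⟩, rfl⟩
  | succ r ih =>
    intro V W U hV hm hWU hr hfull
    obtain ⟨V₁, hsub, hvar, hf⟩ := exists_irred V W U hV hm (fun h => by
      have := Submodule.finrank_mono h
      omega) hfull
    obtain ⟨U', h1, h2, h3⟩ := exists_subspace_between W U hWU (r + 1) (by omega)
    obtain ⟨l, hl⟩ := ih (V₁ ∩ planeSet U') W U' (closed_inter hvar.1 (planeSet_closed U'))
      (fun x hx => hm x (hsub hx.1)) h1 (by omega) (by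
        intro p hp
        rcases hf p (h2 hp) with h | ⟨x, hx, h⟩
        · exact Or.inl h
        · refine Or.inr ⟨x, ⟨hx, ?_⟩, h⟩
          exact (sup_le h1 ((Submodule.span_singleton_le_iff_mem _ _).2 hp) :
            W ⊔ Submodule.span KK {p} ≤ U') h)
    let ι : {W : Set (Pn N) // ProjVariety W ∧ W ⊆ V₁ ∩ planeSet U'} →
        {W : Set (Pn N) // ProjVariety W ∧ W ⊆ V} :=
      fun Z => ⟨Z.1, Z.2.1, (Z.2.2.trans Set.inter_subset_left).trans hsub⟩
    have hι : StrictMono ι := fun a b hab => hab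
    have hlast : (l.map ι hι).last < (⟨V₁, hvar, hsub⟩ : {W : Set (Pn N) // ProjVariety W ∧ W ⊆ V}) := by
      rw [LTSeries.last_map]
      have hle : (ι l.last).1 ⊆ V₁ ∩ planeSet U' := l.last.2.2
      refine lt_of_le_not_ge (fun x hx => (hle hx).1) fun hge => ?_
      have : ∃ p ∈ U, p ∉ U' := by
        by_contra! hcon
        have := Submodule.finrank_mono (show U ≤ U' from hcon)
        omega
      obtain ⟨p, hp, hpU⟩ := this
      rcases hf p hp with h | ⟨x, hx, h⟩
      · exact hpU (h1 h)
      · have hxU : x.rep ∈ U' := (hle (hge hx)).2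
        obtain ⟨w, hw, y, hy, hwy⟩ := Submodule.mem_sup.1 h
        obtain ⟨a, rfl⟩ := Submodule.mem_span_singleton.1 hy
        have ha : a ≠ 0 := by
          rintro rfl
          apply hm x (hsub hx)
          rw [← hwy]; simpa using hw
        apply hpU
        refine (U'.smul_mem_iff ha).1 ?_
        have : a • p = x.rep - w := by rw [← hwy]; abel
        rw [this]
        exact U'.sub_mem hxU (h1 hw)
    refine ⟨(l.map ι hι).snoc _ hlast, ?_⟩
    simp [hl]

/-- The vector over the algebraic closure attached to a vector of small natural numbers. -/
noncomputable def gridVec {N d : ℕ} (w : Fin (N + 1) → Fin (d + 1)) : Fin (N + 1) → KK :=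
  fun i => ((w i : ℕ) : KK)

lemma exists_center {N : ℕ} (d m : ℕ) (hd : 1 ≤ d) (V : Set (Pn N)) (hV : ProjClosed V)
    (hdeg : projDeg V = d) (hdim : projDim V = ((m : ENat) : WithBot ENat)) (k : ℕ) (hk : k ≤ N - m) :
    ∃ w : Fin k → Fin (N + 1) → Fin (d + 1), LinearIndependent KK (fun i => gridVec (w i)) ∧
      Misses V (Submodule.span KK (Set.range fun i => gridVec (w i))) := by
  classical
  induction k with
  | zero =>
    refine ⟨Fin.elim0, linearIndependent_empty_type, ?_⟩
    intro x _ h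
    rw [Set.range_eq_empty, Submodule.span_empty, Submodule.mem_bot] at h
    exact x.rep_nonzero h
  | succ k ih =>
    obtain ⟨w, hli, hm⟩ := ih (by omega)
    set W := Submodule.span KK (Set.range fun i => gridVec (w i)) with hW
    have hrank : Module.finrank KK W = k := by
      rw [hW, finrank_span_eq_card hli, Fintype.card_fin]
    have hex : ∃ p : Fin (N + 1) → Fin (d + 1), ¬ Bad V W (gridVec p) := by
      by_contra! hcon
      let G : Finset KK := Finset.univ.image (fun i : Fin (d + 1) => ((i : ℕ) : KK))
      have hG : G.card = d + 1 := by
        rw [Finset.card_image_of_injective, Finset.card_univ, Fintype.card_fin]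
        intro i j hij
        exact Fin.ext (Nat.cast_injective hij)
      have hall := grid_lemma (Bad V W) G (fun p v h t =>
          line_lemma V W d (fun H v hm => by rw [← hdeg]; exact deg_section V hV H v hm) hm p v G
            (by omega) (by omega) h t) (by
          intro p hp
          have : ∀ i, ∃ j : Fin (d + 1), ((j : ℕ) : KK) = p i := by
            intro i
            obtain ⟨j, -, hj⟩ := Finset.mem_image.1 (hp i)
            exact ⟨j, hj⟩
          choose q hq using this
          have : p = gridVec q := by ext i; exact (hq i).symm
          rw [this]; exact hcon q)
      obtain ⟨l, hl⟩ := chain_lemma (m + 1) V W ⊤ hV hm le_top (by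
        rw [hrank, finrank_top, Module.finrank_fin_fun]; omega) (fun p _ => hall p)
      have := Order.LTSeries.length_le_krullDim l
      change _ ≤ projDim V at this
      rw [hdim, hl] at this
      have h2 : m + 1 ≤ m := by exact_mod_cast this
      omega
    obtain ⟨p, hp⟩ := hex
    refine ⟨Fin.cons p w, ?_, ?_⟩
    · have : (fun i => gridVec ((Fin.cons p w : Fin (k + 1) → Fin (N + 1) → Fin (d + 1)) i)) =
          Fin.cons (gridVec p) (fun i => gridVec (w i)) := by
        funext i
        refine Fin.cases ?_ (fun j => ?_) i <;> simp
      rw [this, linearIndependent_finCons]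
      exact ⟨hli, fun h => hp (Or.inl h)⟩
    · have : (fun i => gridVec ((Fin.cons p w : Fin (k + 1) → Fin (N + 1) → Fin (d + 1)) i)) =
          Fin.cons (gridVec p) (fun i => gridVec (w i)) := by
        funext i
        refine Fin.cases ?_ (fun j => ?_) i <;> simp
      rw [this, Fin.range_cons, Submodule.span_insert, sup_comm]
      intro x hx h
      exact hp (Or.inr ⟨x, hx, h⟩)

lemma primitive_eq {n : ℕ} (x y : Fin n → ℤ) (hx : IsPrimitiveVec x) (hy : IsPrimitiveVec y)
    (h : ∀ i j, x i * y j = y i * x j) : x = y ∨ x = -y := by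
  have habs : ∀ i, normalize (x i) = normalize (y i) := by
    intro i
    have h1 : Finset.univ.gcd (fun j => x i * y j) = normalize (x i) := by
      rw [Finset.gcd_mul_left, hy, mul_one]
    have h2 : Finset.univ.gcd (fun j => y i * x j) = normalize (y i) := by
      rw [Finset.gcd_mul_left, hx, mul_one]
    rw [← h1, ← h2]
    simp only [h]
  have hne : ∃ i, y i ≠ 0 := by
    by_contra! hcon
    have : Finset.univ.gcd y = 0 := Finset.gcd_eq_zero_iff.2 fun i _ => hcon i
    rw [show Finset.univ.gcd y = 1 from hy] at this
    exact one_ne_zero this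
  obtain ⟨i, hi⟩ := hne
  have hor : x i = y i ∨ x i = - y i := by
    have := habs i
    rw [← Int.abs_eq_normalize, ← Int.abs_eq_normalize] at this
    exact abs_eq_abs.1 this
  rcases hor with h1 | h1
  · left
    ext j
    have := h i j
    rw [h1] at this
    exact (mul_left_cancel₀ hi this).symm
  · right
    ext j
    have := h i j
    rw [h1] at this
    apply mul_left_cancel₀ hi
    simp only [Pi.neg_apply]
    linarith

lemma fibre_count {N : ℕ} (Z : Set (Pn N)) (hZ : Z.Finite) (F : Finset (Fin (N + 1) → ℤ))
    (hF : ∀ x ∈ F, IsPrimitiveVec x ∧ ∃ h : coeK x ≠ 0, Projectivization.mk KK (coeK x) h ∈ Z) :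
    F.card ≤ 2 * Z.ncard := by
  classical
  rw [Set.ncard_eq_toFinset_card Z hZ, ← Fintype.card_coe F, ← Finset.card_univ]
  refine Finset.card_le_mul_card_image_of_maps_to
    (f := fun x : F => Projectivization.mk KK (coeK x.1) (hF x.1 x.2).2.choose) ?_ 2 ?_
  · intro x _
    rw [Set.Finite.mem_toFinset]
    exact (hF x.1 x.2).2.choose_spec
  · intro b _
    by_cases hne : ∃ x₀ : F, Projectivization.mk KK (coeK x₀.1) (hF x₀.1 x₀.2).2.choose = b
    · obtain ⟨x₀, hx₀⟩ := hne
      rw [← Finset.card_image_of_injective _ Subtype.val_injective]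
      refine (Finset.card_le_card (t := {x₀.1, -x₀.1}) ?_).trans Finset.card_le_two
      intro y hy
      obtain ⟨x, hx, rfl⟩ := Finset.mem_image.1 hy
      have hx := (Finset.mem_filter.1 hx).2
      rw [← hx₀, Projectivization.mk_eq_mk_iff'] at hx
      obtain ⟨a, ha⟩ := hx
      simp only [Finset.mem_insert, Finset.mem_singleton]
      apply primitive_eq _ _ (hF x.1 x.2).1 (hF x₀.1 x₀.2).1
      intro i j
      have hi : a * ((x₀.1 i : ℤ) : KK) = ((x.1 i : ℤ) : KK) := congrFun ha i
      have hj : a * ((x₀.1 j : ℤ) : KK) = ((x.1 j : ℤ) : KK) := congrFun ha j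
      have : ((x.1 i : ℤ) : KK) * ((x₀.1 j : ℤ) : KK) = ((x₀.1 i : ℤ) : KK) * ((x.1 j : ℤ) : KK) := by
        rw [← hi, ← hj]; ring
      exact_mod_cast this
    · have : (Finset.univ.filter fun x : F =>
          Projectivization.mk KK (coeK x.1) (hF x.1 x.2).2.choose = b) = ∅ :=
        Finset.filter_eq_empty_iff.2 fun x _ h => hne ⟨x, h⟩
      refine le_trans (le_of_eq ?_) (Nat.zero_le _)
      exact Finset.card_eq_zero.2 (by rw [this])

/-- An integral projection whose kernel is the given rational subspace. -/
lemma exists_projection {N d k : ℕ} (w : Fin k → Fin (N + 1) → Fin (d + 1))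
    (hli : LinearIndependent KK (fun i => gridVec (w i))) :
    ∃ τ : Fin (N + 1 - k) → Fin (N + 1) → ℤ, ∀ x y : Fin (N + 1) → ℤ,
      (∀ l, ∑ j, τ l j * x j = ∑ j, τ l j * y j) →
      coeK x - coeK y ∈ Submodule.span KK (Set.range fun i => gridVec (w i)) := by
  classical
  let wQ : Fin k → Fin (N + 1) → ℚ := fun i j => ((w i j : ℕ) : ℚ)
  let ψ : (Fin (N + 1) → ℚ) →ₗ[ℚ] (Fin (N + 1) → KK) :=
    (Algebra.linearMap ℚ KK).compLeft (Fin (N + 1))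
  have hψ : ∀ i, ψ (wQ i) = gridVec (w i) := by
    intro i; ext j; simp [ψ, wQ, gridVec]
  have hliQ : LinearIndependent ℚ wQ := by
    have h1 : LinearIndependent ℚ (fun i => gridVec (w i)) := hli.restrict_scalars' ℚ
    apply LinearIndependent.of_comp ψ
    convert h1 using 1
    funext i; exact hψ i
  set Q := Submodule.span ℚ (Set.range wQ) with hQ
  have hrank : Module.finrank ℚ ((Fin (N + 1) → ℚ) ⧸ Q) = N + 1 - k := by
    have h1 := Submodule.finrank_quotient_add_finrank Q
    rw [hQ, finrank_span_eq_card hliQ, Fintype.card_fin, Module.finrank_fin_fun] at h1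
    rw [hQ]
    omega
  let e : ((Fin (N + 1) → ℚ) ⧸ Q) ≃ₗ[ℚ] (Fin (N + 1 - k) → ℚ) :=
    LinearEquiv.ofFinrankEq _ _ (by rw [hrank, Module.finrank_fin_fun])
  let T : (Fin (N + 1) → ℚ) →ₗ[ℚ] (Fin (N + 1 - k) → ℚ) := e.toLinearMap ∘ₗ Q.mkQ
  have hT : ∀ x, T x = 0 → x ∈ Q := by
    intro x hx
    have : Q.mkQ x = 0 := e.map_eq_zero_iff.1 hx
    exact (Submodule.Quotient.mk_eq_zero Q).1 this
  obtain ⟨q, hq⟩ := IsLocalization.exist_integer_multiples_of_finite (nonZeroDivisors ℤ)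
    (fun p : Fin (N + 1 - k) × Fin (N + 1) => LinearMap.toMatrix' T p.1 p.2)
  choose τ hτ using hq
  refine ⟨fun l j => τ (l, j), fun x y hxy => ?_⟩
  have hq0 : ((q : ℤ) : ℚ) ≠ 0 := by
    exact_mod_cast nonZeroDivisors.ne_zero q.2
  have hmem : coeQ x - coeQ y ∈ Q := by
    apply hT
    ext l
    rw [← LinearMap.toMatrix'_mulVec T]
    apply mul_left_cancel₀ hq0
    have hτ' : ∀ j, ((q : ℤ) : ℚ) * LinearMap.toMatrix' T l j = ((τ (l, j) : ℤ) : ℚ) := by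
      intro j
      have := hτ (l, j)
      simp only [zsmul_eq_mul, eq_intCast] at this
      exact this.symm
    rw [Matrix.mulVec, dotProduct, Finset.mul_sum]
    simp only [← mul_assoc, hτ', Pi.sub_apply, coeQ, Pi.zero_apply, mul_zero, mul_sub,
      Finset.sum_sub_distrib]
    rw [sub_eq_zero]
    exact_mod_cast hxy l
  have hmap : Q ≤ ((Submodule.span KK (Set.range fun i => gridVec (w i))).restrictScalars ℚ).comap ψ := by
    rw [hQ, Submodule.span_le]
    rintro _ ⟨i, rfl⟩
    change ψ (wQ i) ∈ Submodule.span KK (Set.range fun i => gridVec (w i))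
    rw [hψ]
    exact Submodule.subset_span ⟨i, rfl⟩
  have h1 : ψ (coeQ x - coeQ y) ∈ Submodule.span KK (Set.range fun i => gridVec (w i)) := hmap hmem
  convert h1 using 1
  ext j
  simp [ψ, coeQ, coeK]

lemma count_points {N d k : ℕ} (w : Fin k → Fin (N + 1) → Fin (d + 1)) :
    ∃ C : ℝ, 0 ≤ C ∧ (LinearIndependent KK (fun i => gridVec (w i)) → ∀ V : Set (Pn N),
      ProjClosed V → projDeg V = d →
      Misses V (Submodule.span KK (Set.range fun i => gridVec (w i))) →
      ∀ B : ℝ, 1 ≤ B → (NV V B : ℝ) ≤ C * B ^ (N + 1 - k)) := by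
  classical
  by_cases hli : LinearIndependent KK (fun i => gridVec (w i))
  swap
  · exact ⟨0, le_rfl, fun h => absurd h hli⟩
  obtain ⟨τ, hτ⟩ := exists_projection w hli
  let c : ℤ := ∑ l, ∑ j, |τ l j|
  have hc0 : 0 ≤ c := Finset.sum_nonneg fun l _ => Finset.sum_nonneg fun j _ => abs_nonneg _
  refine ⟨2 * d * (2 * c + 1 : ℝ) ^ (N + 1 - k), by positivity, fun _ V hV hdeg hm B hB => ?_⟩
  set P := {x : Fin (N + 1) → ℤ | IsPrimitiveVec x ∧ heightVec x ≤ B ∧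
    ∃ h : coeK x ≠ 0, Projectivization.mk KK (coeK x) h ∈ V} with hP
  have hbd : ∀ x ∈ P, ∀ i, |x i| ≤ ⌊B⌋ := by
    intro x hx i
    rw [Int.le_floor]
    refine le_trans ?_ hx.2.1
    rw [heightVec]
    have : (x i).natAbs ≤ Finset.univ.sup fun i => (x i).natAbs :=
      Finset.le_sup (f := fun i => (x i).natAbs) (Finset.mem_univ i)
    have h2 : ((x i).natAbs : ℝ) ≤ ((Finset.univ.sup fun i => (x i).natAbs : ℕ) : ℝ) := by
      exact_mod_cast this
    rwa [Nat.cast_natAbs] at h2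
  have hPfin : P.Finite := by
    refine (Set.finite_Icc (fun _ : Fin (N + 1) => -⌊B⌋) (fun _ => ⌊B⌋)).subset fun x hx => ?_
    exact ⟨fun i => (abs_le.1 (hbd x hx i)).1, fun i => (abs_le.1 (hbd x hx i)).2⟩
  have hB0 : 0 ≤ ⌊B⌋ := Int.floor_nonneg.2 (by linarith)
  let box : Finset (Fin (N + 1 - k) → ℤ) :=
    Fintype.piFinset fun _ => Finset.Icc (-(c * ⌊B⌋)) (c * ⌊B⌋)
  have hcard : hPfin.toFinset.card ≤ (2 * d) * box.card := by
    refine Finset.card_le_mul_card_image_of_maps_to (f := fun x l => ∑ j, τ l j * x j) ?_ _ ?_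
    · intro x hx
      rw [Set.Finite.mem_toFinset] at hx
      rw [Fintype.mem_piFinset]
      intro l
      rw [Finset.mem_Icc, ← abs_le]
      calc |∑ j, τ l j * x j| ≤ ∑ j, |τ l j * x j| := Finset.abs_sum_le_sum_abs _ _
        _ ≤ ∑ j, |τ l j| * ⌊B⌋ := Finset.sum_le_sum fun j _ => by
            rw [abs_mul]; exact mul_le_mul_of_nonneg_left (hbd x hx j) (abs_nonneg _)
        _ = (∑ j, |τ l j|) * ⌊B⌋ := by rw [Finset.sum_mul]
        _ ≤ c * ⌊B⌋ := by
            refine mul_le_mul_of_nonneg_right ?_ hB0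
            exact Finset.single_le_sum (f := fun l => ∑ j, |τ l j|)
              (fun l _ => Finset.sum_nonneg fun j _ => abs_nonneg _) (Finset.mem_univ l)
    · intro b _
      by_cases hne : ∃ x₀ : Fin (N + 1) → ℤ, ∀ l, ∑ j, τ l j * x₀ j = b l
      · obtain ⟨x₀, hx₀⟩ := hne
        obtain ⟨hfin, hle⟩ := deg_section V hV _ (coeK x₀) hm
        rw [hdeg] at hle
        refine (fibre_count _ hfin _ ?_).trans (Nat.mul_le_mul_left 2 hle)
        intro x hx
        obtain ⟨hxP, hxb⟩ := Finset.mem_filter.1 hx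
        rw [Set.Finite.mem_toFinset] at hxP
        obtain ⟨h1, -, h2, h3⟩ := hxP
        refine ⟨h1, h2, h3, ?_⟩
        obtain ⟨a, ha⟩ := Projectivization.exists_smul_eq_mk_rep KK (coeK x) h2
        change (Projectivization.mk KK (coeK x) h2).rep ∈
          Submodule.span KK (Set.range fun i => gridVec (w i)) ⊔ Submodule.span KK {coeK x₀}
        rw [← ha]
        refine Submodule.smul_mem _ (a : KK) ?_
        have h4 := hτ x x₀ (fun l => by rw [hx₀ l, ← hxb])
        have : coeK x = (coeK x - coeK x₀) + coeK x₀ := by abel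
        rw [this]
        exact Submodule.add_mem_sup h4 (Submodule.mem_span_singleton_self _)
      · rw [Finset.filter_eq_empty_iff.2]
        · simp
        · intro x _ h
          exact hne ⟨x, fun l => congrFun h l⟩
  have hNV : NV V B = hPfin.toFinset.card := by
    rw [NV]
    exact Set.ncard_eq_toFinset_card P hPfin
  have hbox : (box.card : ℝ) ≤ ((2 * c + 1) * B) ^ (N + 1 - k) := by
    have h1 : box.card = ((2 * (c * ⌊B⌋) + 1).toNat) ^ (N + 1 - k) := by
      simp only [box, Fintype.card_piFinset, Int.card_Icc, Finset.prod_const, Finset.card_univ,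
        Fintype.card_fin]
      congr 2
      ring
    rw [h1]
    push_cast
    have h2 : (((2 * (c * ⌊B⌋) + 1).toNat : ℕ) : ℝ) = 2 * (c * ⌊B⌋) + 1 := by
      have : (((2 * (c * ⌊B⌋) + 1).toNat : ℕ) : ℤ) = 2 * (c * ⌊B⌋) + 1 :=
        Int.toNat_of_nonneg (by positivity)
      exact_mod_cast this
    rw [h2]
    have hc0' : (0 : ℝ) ≤ c := by exact_mod_cast hc0
    have hB0' : (0 : ℝ) ≤ ⌊B⌋ := by exact_mod_cast hB0
    refine pow_le_pow_left₀ (by positivity) ?_ _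
    have := Int.floor_le B
    nlinarith [mul_le_mul_of_nonneg_left this hc0']
  rw [hNV]
  calc (hPfin.toFinset.card : ℝ) ≤ ((2 * d * box.card : ℕ) : ℝ) := by exact_mod_cast hcard
    _ = 2 * d * (box.card : ℝ) := by push_cast; ring
    _ ≤ 2 * d * ((2 * c + 1) * B) ^ (N + 1 - k) := by gcongr
    _ = _ := by rw [mul_pow]; ring

lemma deg_pos {N m : ℕ} (V : Set (Pn N)) (hV : ProjClosed V)
    (hdim : projDim V = ((m : ENat) : WithBot ENat)) : 1 ≤ projDeg V := by
  have hne : Nonempty {W : Set (Pn N) // ProjVariety W ∧ W ⊆ V} := by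
    by_contra hcon
    rw [not_nonempty_iff] at hcon
    have : projDim V = ⊥ := Order.krullDim_eq_bot
    rw [hdim] at this
    exact absurd this (by simp)
  obtain ⟨W, hvar, hsub⟩ := hne
  obtain ⟨x, hx⟩ := hvar.2.1
  have hm : Misses V (⊥ : Submodule KK (Fin (N + 1) → KK)) := fun y _ h => y.rep_nonzero h
  obtain ⟨hfin, hle⟩ := deg_section V hV ⊥ x.rep hm
  refine le_trans ?_ hle
  refine (Set.ncard_pos hfin).2 ?_
  exact ⟨x, hsub hx, Submodule.mem_sup_right (Submodule.mem_span_singleton_self _)⟩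

/-- **Lemma 2 (trivial estimate).** A projective variety V ⊂ Pᴺ of degree d and
dimension m, defined over the algebraic closure of ℚ, has
N_V(B) = O_{d,N}(B^{m+1}). -/
theorem statement3 (d N : ℕ) :
    ∃ C : ℝ, 0 < C ∧ ∀ (m : ℕ) (V : Set (Pn N)),
      ProjClosed V → projDeg V = d → projDim V = ((m : ENat) : WithBot ENat) →
      ∀ B : ℝ, 1 ≤ B → (NV V B : ℝ) ≤ C * B ^ (m + 1) := by
  classical
  choose C hC0 hC using fun p : (Σ k : Fin (N + 1), (Fin k → Fin (N + 1) → Fin (d + 1))) =>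
    count_points p.2
  refine ⟨1 + ∑ p, C p, add_pos_of_pos_of_nonneg one_pos (Finset.sum_nonneg fun p _ => hC0 p), ?_⟩
  intro m V hV hdeg hdim B hB
  have hd : 1 ≤ d := hdeg ▸ deg_pos V hV hdim
  obtain ⟨w, hli, hm⟩ := exists_center d m hd V hV hdeg hdim (N - m) le_rfl
  let p : (Σ k : Fin (N + 1), (Fin k → Fin (N + 1) → Fin (d + 1))) := ⟨⟨N - m, by omega⟩, w⟩
  have h1 : (NV V B : ℝ) ≤ C p * B ^ (N + 1 - (N - m)) := hC p hli V hV hdeg hm B hB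
  have h2 : C p ≤ 1 + ∑ p, C p := by
    have := Finset.single_le_sum (f := C) (fun p _ => hC0 p) (Finset.mem_univ p)
    linarith
  refine h1.trans ?_
  have hB0 : (0 : ℝ) ≤ B := by linarith
  exact mul_le_mul h2 (pow_le_pow_right₀ hB (by omega)) (by positivity) ((hC0 p).trans h2)

end
end
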